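/- Let λ ≥ 1 and s > −1/4, and assume ‖u₀‖_{L_λ^2} ≤ ρ for a sufficiently small absolute constant 0 < ρ ≪ 1. Suppose u is a real-valued smooth solution of the renormalized rescaled modified Kawahara equation with u ∈ X_λ^{s,b}. Then there exists b = b(s) ≥ 1/2 such that for all t in the local time interval, (1/λ) Σ_{n∈ℤ_λ} ⟨n⟩^{2s} |û(t,n)|² ≲ ‖u₀‖_{H_λ^s}² + λ^{ς} ‖u‖_{X_λ^{s,b}}⁴, where ς = 3 − 5b + 2s > 0. -/

import Mathlib

/-!
The exponent `b = 1/2` works, so that `ς = 1/2 + 2s`, and the bound holds already with the datum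
term alone: for small `L²` data the `H^s` energy is propagated with a constant depending only on
`s`. This is a persistence of regularity argument carried out directly on the Fourier modes.

*Gauge.* Multiplying `û(t, n)` by the exponential of minus `i` times its accumulated phase
(`phaseOf`, the time integral of the linear dispersion plus the self-interaction `|û(t, n)|²`)
removes every resonant contribution. The moduli do not change, and the gauged modes are driven by
the nonresonant interactions only (`hasDerivAt_gauged`, `gaugedFlow_of_sol`).

*Gain from oscillation.* The interaction of `n₁, n₂, n₃` with `n` carries a phase whose speed is
`-k₁k₂k₃ (5/2 (k₁² + k₂² + k₃²) + 3βλ⁻²)`, where `k₁, k₂, k₃` are the pairwise sums of `n₁, n₂, n₃`,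
up to a perturbation by the self-interaction that is only as regular in time as the modes. The
amplitude `amp` of a mode is its supremum together with its Hölder-`1/2` constant in time. This
regularity is enough to integrate by parts (`osc`): an interaction whose phase speed is about `H`
contributes at most `√(t - t') / √H` times the product of its amplitudes (`term_bound`), which
reproduces a Hölder-`1/2` bound. Hence the amplitudes are at most the initial amplitudes plus a
trilinear form in the amplitudes (`GaugedFlow.amp_le`).

*Trilinear estimate.* The Sobolev weight of the output is distributed over the inputs at the cost
of a quarter power of `Q = k₁² + k₂² + k₃²` (`weight_le`), and it is here that `s > -1/4` is
needed. Cauchy–Schwarz reduces the estimate (`trilinear`) to bounding, uniformly in the output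
frequency, the sum over the nonresonant interactions of `Q (1 + Q)^(1/4)` times the squared gain.
This kernel is dominated by products of a function of two of the `k`'s that is summable over the
lattice (`ker_le`, `tsum_kerZ_le`).

*Closing the argument.* The energy inequality (`energy_step`) improves an `L²` smallness
assumption on the amplitudes. The amplitudes depend continuously on the length of the time
interval because a smooth solution has rapidly decaying coefficients (`gauged_decay`), so smallness
extends step by step to `[0, 1]`, and the energy inequality in `H^s` then gives the claim
(`flow_bound`). Parseval (`wsum_zero_fcoefL_le`) supplies the smallness of the datum.
-/


noncomputable section

open MeasureTheory Real Set Filter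
open scoped ENNReal Topology

namespace Kawahara

/-- Fourier coefficient of a `2π`-periodic function on `𝕋`:
`f̂(n) = ∫_0^{2π} e^{-inx} f(x) dx`. -/
def fcoef (f : ℝ → ℂ) (n : ℤ) : ℂ :=
  ∫ x in (0:ℝ)..(2 * π), Complex.exp (-Complex.I * (n : ℂ) * (x : ℂ)) * f x

/-- Fourier coefficient on the rescaled torus `𝕋_λ` at frequency `n = m/λ`:
`f̂(m/λ) = ∫_0^{2πλ} e^{-i(m/λ)x} f(x) dx`. -/
def fcoefL (lam : ℝ) (f : ℝ → ℂ) (m : ℤ) : ℂ :=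
  ∫ x in (0:ℝ)..(2 * π * lam),
    Complex.exp (-Complex.I * ((((m : ℝ) / lam) : ℝ) : ℂ) * (x : ℂ)) * f x

/-- squared Japanese bracket `⟨x⟩² = 1 + x²`. -/
def jb2 (x : ℝ) : ℝ := 1 + x ^ 2

/-- squared `H^s(𝕋)` norm: `(1/2π) Σ_n ⟨n⟩^{2s} |f̂(n)|²` (as an extended real). -/
def HsSq (s : ℝ) (f : ℝ → ℂ) : ℝ≥0∞ :=
  ENNReal.ofReal (1 / (2 * π)) *
    ∑' n : ℤ, ENNReal.ofReal (jb2 (n : ℝ) ^ s * ‖fcoef f n‖ ^ 2)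

/-- `H^s(𝕋)` norm as a real number. -/
def HsNormR (s : ℝ) (f : ℝ → ℂ) : ℝ :=
  Real.sqrt ((1 / (2 * π)) * ∑' n : ℤ, jb2 (n : ℝ) ^ s * ‖fcoef f n‖ ^ 2)

/-- squared `H^s(𝕋_λ)` norm: `(1/2πλ) Σ_{n∈ℤ_λ} ⟨n⟩^{2s} |f̂(n)|²`. -/
def HsSqL (lam s : ℝ) (f : ℝ → ℂ) : ℝ≥0∞ :=
  ENNReal.ofReal (1 / (2 * π * lam)) *
    ∑' m : ℤ, ENNReal.ofReal (jb2 ((m : ℝ) / lam) ^ s * ‖fcoefL lam f m‖ ^ 2)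

/-- squared `L²(𝕋)` norm. -/
def L2SqT (f : ℝ → ℂ) : ℝ := ∫ x in (0:ℝ)..(2 * π), ‖f x‖ ^ 2

/-- `L²(𝕋)` norm. -/
def L2NormT (f : ℝ → ℂ) : ℝ := Real.sqrt (L2SqT f)

/-- squared `L²(𝕋_λ)` norm. -/
def L2SqL (lam : ℝ) (f : ℝ → ℂ) : ℝ := ∫ x in (0:ℝ)..(2 * π * lam), ‖f x‖ ^ 2

/-- `L²(𝕋_λ)` norm. -/
def L2NormL (lam : ℝ) (f : ℝ → ℂ) : ℝ := Real.sqrt (L2SqL lam f)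

/-- the modified symbol `p₀(n) = n⁵ + βn³ − (γ + (μ/2π) c) n`, where `c = ‖v₀‖²_{L²}`. -/
def p0 (β γ μ c : ℝ) (n : ℝ) : ℝ :=
  n ^ 5 + β * n ^ 3 - (γ + μ / (2 * π) * c) * n

/-- the rescaled modified symbol `p_λ(n)` at frequency `n = m/λ`. -/
def pL (β γ μ lam : ℝ) (u₀ : ℝ → ℂ) (m : ℤ) : ℝ :=
  ((m : ℝ) / lam) ^ 5 + β * (lam ^ 2)⁻¹ * ((m : ℝ) / lam) ^ 3
    - (γ + μ / (2 * π * lam) * L2SqL lam u₀) * ((m : ℝ) / lam)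
    - μ * ((m : ℝ) / lam) / (2 * π * lam) ^ 2 * ‖fcoefL lam u₀ m‖ ^ 2

/-- space–time Fourier transform on `ℝ × 𝕋`. -/
def stFT (f : ℝ → ℝ → ℂ) (τ : ℝ) (n : ℤ) : ℂ :=
  ((1 / (2 * π) : ℝ) : ℂ) *
    ∫ t : ℝ, Complex.exp (-Complex.I * (τ : ℂ) * (t : ℂ)) * fcoef (f t) n

/-- space–time Fourier transform on `ℝ × 𝕋_λ`. -/
def stFTL (lam : ℝ) (f : ℝ → ℝ → ℂ) (τ : ℝ) (m : ℤ) : ℂ :=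
  ((1 / (2 * π) : ℝ) : ℂ) *
    ∫ t : ℝ, Complex.exp (-Complex.I * (τ : ℂ) * (t : ℂ)) * fcoefL lam (f t) m

/-- squared `Y^{s,b}` norm (with `c = ‖v₀‖²_{L²}` entering the symbol `p₀`). -/
def YsbSq (β γ μ c s b : ℝ) (f : ℝ → ℝ → ℂ) : ℝ≥0∞ :=
  ENNReal.ofReal (1 / (2 * π)) *
    ∑' n : ℤ, ∫⁻ τ : ℝ,
      ENNReal.ofReal (jb2 (n : ℝ) ^ s * jb2 (τ - p0 β γ μ c (n : ℝ)) ^ b *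
        ‖stFT f τ n‖ ^ 2)

/-- squared time-restriction norm `Y_T^{s,b}`: infimum over extensions coinciding with `f`
on `(-T,T)`. -/
def YTsbSq (β γ μ c s b T : ℝ) (f : ℝ → ℝ → ℂ) : ℝ≥0∞ :=
  ⨅ g ∈ {g : ℝ → ℝ → ℂ | ∀ t ∈ Ioo (-T) T, ∀ x : ℝ, g t x = f t x},
    YsbSq β γ μ c s b g

/-- squared `X_λ^{s,b}` norm (the symbol `p_λ` is determined by the datum `u₀`). -/
def XsbSqL (β γ μ lam : ℝ) (u₀ : ℝ → ℂ) (s b : ℝ) (f : ℝ → ℝ → ℂ) : ℝ≥0∞ :=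
  ENNReal.ofReal (1 / (2 * π * lam)) *
    ∑' m : ℤ, ∫⁻ τ : ℝ,
      ENNReal.ofReal (jb2 ((m : ℝ) / lam) ^ s * jb2 (τ - pL β γ μ lam u₀ m) ^ b *
        ‖stFTL lam f τ m‖ ^ 2)

/-- the linear Kawahara propagator
`S(t)f = (1/2π) Σ_n e^{inx} e^{it(n⁵+βn³−γn)} f̂(n)`. -/
def Sprop (β γ : ℝ) (t : ℝ) (f : ℝ → ℂ) (x : ℝ) : ℂ :=
  ((1 / (2 * π) : ℝ) : ℂ) * ∑' n : ℤ,
    Complex.exp (Complex.I * ((n : ℂ) * (x : ℂ) +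
      (t : ℂ) * ((((n : ℝ) ^ 5 + β * (n : ℝ) ^ 3 - γ * (n : ℝ)) : ℝ) : ℂ))) * fcoef f n

/-- `v` solves the Duhamel integral equation
`v(t) = S(t)v₀ + (μ/3) ∫₀ᵗ S(t−s) ∂_x(v(s)³) ds` on `[0,T]`. -/
def IsDuhamelSol (β γ μ T : ℝ) (v₀ : ℝ → ℂ) (v : ℝ → ℝ → ℂ) : Prop :=
  ∀ t ∈ Icc (0:ℝ) T, ∀ x : ℝ,
    v t x = Sprop β γ t v₀ x +
      ((μ / 3 : ℝ) : ℂ) * ∫ s in (0:ℝ)..t,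
        Sprop β γ (t - s) (fun y => deriv (fun z => (v s z) ^ 3) y) x

/-- `v` belongs to `C([0,T]; H^s(𝕋))`. -/
def ContInHs (s T : ℝ) (v : ℝ → ℝ → ℂ) : Prop :=
  ∀ t₀ ∈ Icc (0:ℝ) T, HsSq s (v t₀) < ⊤ ∧
    ∀ ε : ℝ, 0 < ε → ∃ δ : ℝ, 0 < δ ∧ ∀ t ∈ Icc (0:ℝ) T, |t - t₀| < δ →
      HsSq s (fun x => v t x - v t₀ x) < ENNReal.ofReal ε

/-- spatial rescaling `f_λ(x) = λ^{-2} f(x/λ)`. -/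
def rescaleS (lam : ℝ) (f : ℝ → ℂ) : ℝ → ℂ :=
  fun x => ((((lam ^ 2)⁻¹ : ℝ)) : ℂ) * f (x / lam)

/-- space–time rescaling `v_λ(t,x) = λ^{-2} v(λ^{-5}t, λ^{-1}x)`. -/
def rescaleST (lam : ℝ) (v : ℝ → ℝ → ℂ) : ℝ → ℝ → ℂ :=
  fun t x => ((((lam ^ 2)⁻¹ : ℝ)) : ℂ) * v (t / lam ^ 5) (x / lam)

/-- Fourier coefficient of a space–time function at time `t` and frequency `m/λ`. -/
def uhat (lam : ℝ) (u : ℝ → ℝ → ℂ) (t : ℝ) (m : ℤ) : ℂ := fcoefL lam (u t) m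

/-- the non-resonant convolution sum
`Σ_{N_n^λ} û₁(n₁)û₂(n₂)û₃(n₃)` with `n = m/λ`, `n_i = m_i/λ`,
over frequencies with `(n₁+n₂)(n₂+n₃)(n₃+n₁) ≠ 0` and `n₁+n₂+n₃ = n`. -/
def nonresSum (lam : ℝ) (u₁ u₂ u₃ : ℝ → ℝ → ℂ) (t : ℝ) (m : ℤ) : ℂ :=
  ∑' q : ℤ × ℤ,
    if q.1 + q.2 ≠ 0 ∧ q.2 + (m - q.1 - q.2) ≠ 0 ∧ (m - q.1 - q.2) + q.1 ≠ 0 then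
      uhat lam u₁ t q.1 * uhat lam u₂ t q.2 * uhat lam u₃ t (m - q.1 - q.2)
    else 0

/-- `u` solves the renormalized rescaled modified Kawahara equation, with datum `u₀`,
for times in `I`:
`∂_t û(n) − i p_λ(n) û(n)
  = −(μin/(2πλ)²)(|û(n)|²−|û₀(n)|²) û(n) + (μin/(3(2πλ)²)) Σ_{N_n^λ} û(n₁)û(n₂)û(n₃)`. -/
def IsRenormSolOn (β γ μ lam : ℝ) (u₀ : ℝ → ℂ) (u : ℝ → ℝ → ℂ) (I : Set ℝ) : Prop :=
  (∀ x, u 0 x = u₀ x) ∧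
  ∀ t ∈ I, ∀ m : ℤ,
    HasDerivAt (fun t' => uhat lam u t' m)
      (Complex.I * ((pL β γ μ lam u₀ m : ℝ) : ℂ) * uhat lam u t m
        - (((μ * ((m : ℝ) / lam) / (2 * π * lam) ^ 2) : ℝ) : ℂ) * Complex.I *
            (((‖uhat lam u t m‖ ^ 2 - ‖fcoefL lam u₀ m‖ ^ 2) : ℝ) : ℂ) * uhat lam u t m
        + (((μ * ((m : ℝ) / lam) / (3 * (2 * π * lam) ^ 2)) : ℝ) : ℂ) * Complex.I *
            nonresSum lam u u u t m) t

/-- a smooth, real-valued, `2πλ`-periodic (in space) space–time function. -/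
def SmoothRealPeriodic (lam : ℝ) (u : ℝ → ℝ → ℂ) : Prop :=
  ContDiff ℝ (⊤ : ℕ∞) (Function.uncurry u) ∧ (∀ t x, (u t x).im = 0) ∧
    ∀ t x, u t (x + 2 * π * lam) = u t x

/-- a smooth, real-valued, `2πλ`-periodic function on `𝕋_λ`. -/
def SmoothRealPeriodicS (lam : ℝ) (f : ℝ → ℂ) : Prop :=
  ContDiff ℝ (⊤ : ℕ∞) f ∧ (∀ x, (f x).im = 0) ∧ ∀ x, f (x + 2 * π * lam) = f x

/-- `log λ`, replaced by `1` when `λ = 1`. -/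
def logw (lam : ℝ) : ℝ := if lam = 1 then 1 else Real.log lam

/-- inverse spatial Fourier transform on `𝕋`: `(1/2π) Σ_n a(n) e^{inx}`. -/
def invF (a : ℤ → ℂ) (x : ℝ) : ℂ :=
  ((1 / (2 * π) : ℝ) : ℂ) * ∑' n : ℤ, a n * Complex.exp (Complex.I * (n : ℂ) * (x : ℂ))

end Kawahara

open Kawahara

namespace Kawahara

/-! ### Oscillatory integrals with a slowly varying phase -/

/-- Oscillatory integral whose phase speed `σ` has size `H` but is only Hölder-`1/2`, like the
amplitude `g`. The quotient `g / σ` cannot be differentiated, so it is averaged over the wavelength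
`1 / H` before integrating by parts; the error of the averaging and the boundary terms both gain
`√(b - a) / √H`. -/
lemma osc {S σ : ℝ → ℝ} {g : ℝ → ℂ} (hS : ∀ t, HasDerivAt S (σ t) t) (hσ : Continuous σ)
    (hg : Continuous g) {a b H G : ℝ} (hab : a ≤ b) (hb : b - a ≤ 1) (hH : 1 ≤ H) (hG : 0 ≤ G)
    (h1 : ∀ t ∈ Icc a b, H / 2 ≤ |σ t|) (h2 : ∀ t ∈ Icc a b, |σ t| ≤ 2 * H)
    (h3 : ∀ t ∈ Icc a b, ∀ t' ∈ Icc a b, |σ t - σ t'| ≤ H * √|t - t'|)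
    (h4 : ∀ t ∈ Icc a b, ‖g t‖ ≤ G)
    (h5 : ∀ t ∈ Icc a b, ∀ t' ∈ Icc a b, ‖g t - g t'‖ ≤ G * √|t - t'|) :
    ‖∫ t in a..b, Complex.exp (Complex.I * S t) * g t‖ ≤ 30 * G * (√(b - a) / √H) := by
  have hSc : Continuous S := continuous_iff_continuousAt.2 fun t => (hS t).continuousAt
  have hH0 : (0:ℝ) < H := by linarith
  have he : ∀ t : ℝ, ‖Complex.exp (Complex.I * S t)‖ = 1 := fun t => by
    rw [mul_comm]; exact Complex.norm_exp_ofReal_mul_I _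
  set δ := b - a with hδ
  have hδ0 : 0 ≤ δ := by linarith
  set h : ℝ := H⁻¹ with hh
  have hh0 : 0 < h := by positivity
  have hh1 : h ≤ 1 := inv_le_one_of_one_le₀ hH
  have hHh : H * h = 1 := mul_inv_cancel₀ hH0.ne'
  have e1 : √δ / √H = √δ * √h := by rw [hh, Real.sqrt_inv]; rfl
  rw [e1]
  have sδ : √δ * √δ = δ := Real.mul_self_sqrt hδ0
  have sh : √h * √h = h := Real.mul_self_sqrt hh0.le
  have sδ0 := Real.sqrt_nonneg δ
  have sh0 : 0 < √h := Real.sqrt_pos.2 hh0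
  have sδ1 : √δ ≤ 1 := Real.sqrt_le_one.2 hb
  rcases le_total δ h with hc | hc
  · -- on an interval shorter than the wavelength the trivial bound suffices
    have : ‖∫ t in a..b, Complex.exp (Complex.I * S t) * g t‖ ≤ G * |b - a| := by
      apply intervalIntegral.norm_integral_le_of_norm_le_const
      intro t ht
      rw [uIoc_of_le hab] at ht
      rw [norm_mul, he, one_mul]
      exact h4 t ⟨ht.1.le, ht.2⟩
    rw [abs_of_nonneg hδ0] at this
    have h6 : √δ ≤ √h := Real.sqrt_le_sqrt hc
    have : G * δ ≤ G * (√δ * √h) := by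
      apply mul_le_mul_of_nonneg_left _ hG
      nlinarith
    have : 0 ≤ G * (√δ * √h) := by positivity
    linarith
  have h6 : √h ≤ √δ := Real.sqrt_le_sqrt hc
  -- the projection `c` onto `[a, b]` extends the quotient to the line with the same Hölder bound
  set c : ℝ → ℝ := fun t => max a (min b t) with hc_def
  have hcc : Continuous c := by fun_prop
  have hcm : ∀ t, c t ∈ Icc a b := fun t => ⟨le_max_left _ _, max_le hab (min_le_left _ _)⟩
  have hcid : ∀ t ∈ Icc a b, c t = t := fun t ht => by
    simp [hc_def, min_eq_right ht.2, max_eq_right ht.1]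
  have hcl : ∀ t t', |c t - c t'| ≤ |t - t'| := fun t t' =>
    (abs_max_sub_max_le_max a (min b t) a (min b t')).trans
      (max_le (by simp) ((abs_min_sub_min_le_max b t b t').trans (max_le (by simp) le_rfl)))
  have hσ0 : ∀ t, (σ (c t)) ≠ 0 := fun t h0 => by
    have := h1 _ (hcm t); rw [h0, abs_zero] at this; linarith
  set q : ℝ → ℂ := fun t => g (c t) / (σ (c t) : ℂ) with hq
  have hqc : Continuous q := by
    apply Continuous.div (by fun_prop) (by fun_prop)
    intro t; exact_mod_cast hσ0 t
  have hqb : ∀ t, ‖q t‖ ≤ 2 * G * h := fun t => by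
    simp only [hq, norm_div, Complex.norm_real, Real.norm_eq_abs]
    rw [div_le_iff₀ (abs_pos.2 (hσ0 t))]
    calc ‖g (c t)‖ ≤ G := h4 _ (hcm t)
      _ = 2 * G * h * (H / 2) := by linear_combination (-G) * hHh
      _ ≤ _ := by gcongr; exact h1 _ (hcm t)
  have hqh : ∀ t t', ‖q t - q t'‖ ≤ 6 * G * h * √|t - t'| := fun t t' => by
    have e : q t - q t' = (g (c t) - g (c t')) / σ (c t) +
        q t' * ((σ (c t') - σ (c t) : ℝ) : ℂ) / σ (c t) := by
      have a1 : (σ (c t) : ℂ) ≠ 0 := by exact_mod_cast hσ0 t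
      have a2 : (σ (c t') : ℂ) ≠ 0 := by exact_mod_cast hσ0 t'
      simp only [hq]; push_cast; field_simp; ring
    have m1 : √|c t - c t'| ≤ √|t - t'| := Real.sqrt_le_sqrt (hcl _ _)
    have b1 : ‖g (c t) - g (c t')‖ ≤ G * √|t - t'| :=
      (h5 _ (hcm t) _ (hcm t')).trans (by gcongr)
    have b2 : |σ (c t') - σ (c t)| ≤ H * √|t - t'| := by
      rw [abs_sub_comm]; exact (h3 _ (hcm t) _ (hcm t')).trans (by gcongr)
    have b3 := h1 _ (hcm t)
    have hp := abs_pos.2 (hσ0 t)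
    rw [e, ← add_div, norm_div, Complex.norm_real, Real.norm_eq_abs, div_le_iff₀ hp]
    have r0 := Real.sqrt_nonneg |t - t'|
    calc _ ≤ ‖g (c t) - g (c t')‖ + ‖q t'‖ * |σ (c t') - σ (c t)| := by
          refine (norm_add_le _ _).trans ?_
          rw [norm_mul, Complex.norm_real, Real.norm_eq_abs]
      _ ≤ G * √|t - t'| + 2 * G * h * (H * √|t - t'|) := by
          gcongr; exact hqb t'
      _ = 6 * G * h * √|t - t'| * (H / 2) := by linear_combination (-G * √|t - t'|) * hHh
      _ ≤ _ := by gcongr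
  -- `p` is the average of `q` over the wavelength `h`
  set p : ℝ → ℂ := fun t => (h:ℂ)⁻¹ * ∫ s in t..(t + h), q s with hp
  have hpd : ∀ t, HasDerivAt p ((h:ℂ)⁻¹ * (q (t + h) - q t)) t := fun t => by
    apply HasDerivAt.const_mul
    have := fun x => (intervalIntegral.integral_hasDerivAt_right (hqc.intervalIntegrable 0 x)
      hqc.stronglyMeasurable.stronglyMeasurableAtFilter hqc.continuousAt)
    have h7 := ((this (t + h)).scomp t ((hasDerivAt_id t).add_const h)).sub (this t)
    simp only [one_smul] at h7
    refine h7.congr_of_eventuallyEq (Eventually.of_forall fun s => ?_)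
    simp [← intervalIntegral.integral_interval_sub_left (hqc.intervalIntegrable 0 (s + h))
      (hqc.intervalIntegrable 0 s)]
  have hpc : Continuous p := continuous_iff_continuousAt.2 fun t => (hpd t).continuousAt
  have hhn : ‖(h:ℂ)⁻¹‖ = h⁻¹ := by rw [norm_inv, Complex.norm_real, Real.norm_of_nonneg hh0.le]
  have hhc : (h:ℂ) ≠ 0 := by exact_mod_cast hh0.ne'
  have hpb : ∀ t, ‖p t‖ ≤ 2 * G * h := fun t => by
    have : ‖∫ s in t..(t + h), q s‖ ≤ 2 * G * h * |t + h - t| :=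
      intervalIntegral.norm_integral_le_of_norm_le_const fun s _ => hqb s
    rw [hp]; simp only [norm_mul, hhn]
    rw [inv_mul_le_iff₀ hh0]
    rw [add_sub_cancel_left, abs_of_pos hh0] at this; linarith
  have hpq : ∀ t, ‖q t - p t‖ ≤ 6 * G * h * √h := fun t => by
    have e : q t - p t = (h:ℂ)⁻¹ * ∫ s in t..(t + h), (q t - q s) := by
      rw [intervalIntegral.integral_sub (by simp) (hqc.intervalIntegrable _ _)]
      simp [hp, mul_sub]; rw [inv_mul_cancel_left₀ hhc]
    have : ‖∫ s in t..(t + h), (q t - q s)‖ ≤ 6 * G * h * √h * |t + h - t| :=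
      intervalIntegral.norm_integral_le_of_norm_le_const fun s hs => by
        rw [uIoc_of_le (by linarith)] at hs
        refine (hqh t s).trans ?_
        gcongr
        rw [abs_sub_comm, abs_of_pos (by linarith [hs.1])]; linarith [hs.2]
    rw [e]; simp only [norm_mul, hhn]
    rw [inv_mul_le_iff₀ hh0]
    rw [add_sub_cancel_left, abs_of_pos hh0] at this; linarith
  have hpd' : ∀ t, ‖(h:ℂ)⁻¹ * (q (t + h) - q t)‖ ≤ 6 * G * √h := fun t => by
    rw [norm_mul, hhn, inv_mul_le_iff₀ hh0]
    have := hqh (t + h) t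
    rw [add_sub_cancel_left, abs_of_pos hh0] at this; linarith
  have hE : ∀ t, HasDerivAt (fun t : ℝ => Complex.exp (Complex.I * S t))
      (Complex.exp (Complex.I * S t) * (Complex.I * σ t)) t := fun t =>
    (((hS t).ofReal_comp).const_mul Complex.I).cexp
  have hft := intervalIntegral.integral_eq_sub_of_hasDerivAt (a := a) (b := b)
    (fun t _ => (hE t).mul (hpd t)) (by
      apply Continuous.intervalIntegrable; fun_prop)
  have hsplit : ∫ t in a..b, Complex.exp (Complex.I * S t) * g t =
      (∫ t in a..b, Complex.exp (Complex.I * S t) * (σ t) * (q t - p t)) +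
      (-Complex.I) * ((Complex.exp (Complex.I * S b) * p b - Complex.exp (Complex.I * S a) * p a)
       - ∫ t in a..b, Complex.exp (Complex.I * S t) * ((h:ℂ)⁻¹ * (q (t + h) - q t))) := by
    have hft' : _ = Complex.exp (Complex.I * S b) * p b - Complex.exp (Complex.I * S a) * p a := hft
    rw [← hft', ← intervalIntegral.integral_sub, ← intervalIntegral.integral_const_mul,
      ← intervalIntegral.integral_add]
    · apply intervalIntegral.integral_congr
      intro t ht
      rw [uIcc_of_le hab] at ht
      have a1 : (σ t : ℂ) ≠ 0 := by have := hσ0 t; rw [hcid t ht] at this; exact_mod_cast this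
      have : g t = σ t * q t := by simp only [hq, hcid t ht]; field_simp
      simp only [this]
      linear_combination (Complex.exp (Complex.I * S t) * σ t * p t) * Complex.I_sq
    all_goals apply Continuous.intervalIntegrable; fun_prop
  have n1 : ‖∫ t in a..b, Complex.exp (Complex.I * S t) * (σ t) * (q t - p t)‖
      ≤ 12 * G * √h * |b - a| := by
    apply intervalIntegral.norm_integral_le_of_norm_le_const
    intro t ht
    rw [uIoc_of_le hab] at ht
    rw [norm_mul, norm_mul, he, one_mul, Complex.norm_real, Real.norm_eq_abs]
    calc _ ≤ (2 * H) * (6 * G * h * √h) := by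
          gcongr
          · exact h2 t ⟨ht.1.le, ht.2⟩
          · exact hpq t
      _ = _ := by linear_combination (12 * G * √h) * hHh
  have n2 : ‖∫ t in a..b, Complex.exp (Complex.I * S t) * ((h:ℂ)⁻¹ * (q (t + h) - q t))‖
      ≤ 6 * G * √h * |b - a| := by
    apply intervalIntegral.norm_integral_le_of_norm_le_const
    intro t ht
    rw [norm_mul, he, one_mul]; exact hpd' t
  have n3 : ‖Complex.exp (Complex.I * S b) * p b - Complex.exp (Complex.I * S a) * p a‖
      ≤ 2 * G * h + 2 * G * h := by
    refine (norm_sub_le _ _).trans ?_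
    rw [norm_mul _ (p b), norm_mul _ (p a), he, he, one_mul, one_mul]
    exact add_le_add (hpb _) (hpb _)
  rw [abs_of_nonneg hδ0] at n1 n2
  rw [hsplit]
  have n4 := norm_add_le (∫ t in a..b, Complex.exp (Complex.I * S t) * (σ t) * (q t - p t))
    ((-Complex.I) * ((Complex.exp (Complex.I * S b) * p b - Complex.exp (Complex.I * S a) * p a)
       - ∫ t in a..b, Complex.exp (Complex.I * S t) * ((h:ℂ)⁻¹ * (q (t + h) - q t))))
  rw [norm_mul, norm_neg, Complex.norm_I, one_mul] at n4
  have n5 := norm_sub_le (Complex.exp (Complex.I * S b) * p b - Complex.exp (Complex.I * S a) * p a)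
    (∫ t in a..b, Complex.exp (Complex.I * S t) * ((h:ℂ)⁻¹ * (q (t + h) - q t)))
  have m1 : G * √h * δ ≤ G * (√δ * √h) := by
    rw [mul_assoc]; apply mul_le_mul_of_nonneg_left _ hG
    nlinarith [mul_nonneg sδ0 sh0.le]
  have m2 : G * h ≤ G * (√δ * √h) := by
    apply mul_le_mul_of_nonneg_left _ hG
    nlinarith
  have m3 : 0 ≤ G * (√δ * √h) := by positivity
  linarith

/-! ### The resonance function and the size of the kernel -/

/-- Lower bound for the modulus of the resonance function, in terms of the pairwise sums
`k₁, k₂, k₃` of the three input frequencies. -/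
def resLow (k₁ k₂ k₃ : ℝ) : ℝ := 5 / 2 * |k₁ * k₂ * k₃| * (k₁ ^ 2 + k₂ ^ 2 + k₃ ^ 2)

/-- Square of the gain from oscillation. Integration by parts is used when the resonance is at
least one and dominates the self-interaction, which perturbs the phase speed by `O(√Q / lam)` with
`Q = k₁² + k₂² + k₃²`; otherwise there is no gain. -/
def gainSq (lam k₁ k₂ k₃ : ℝ) : ℝ :=
  if √(k₁ ^ 2 + k₂ ^ 2 + k₃ ^ 2) ≤ lam * resLow k₁ k₂ k₃ ∧ 1 ≤ resLow k₁ k₂ k₃ then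
    (resLow k₁ k₂ k₃)⁻¹ else 1

/-- The kernel of the trilinear estimate: the squared derivative on the output (at most
`Q = k₁² + k₂² + k₃²`), the quarter power lost in distributing the Sobolev weight, and the squared
gain from oscillation. -/
def ker (lam k₁ k₂ k₃ : ℝ) : ℝ :=
  (k₁ ^ 2 + k₂ ^ 2 + k₃ ^ 2) * (1 + (k₁ ^ 2 + k₂ ^ 2 + k₃ ^ 2)) ^ (1 / 4 : ℝ) *
    gainSq lam k₁ k₂ k₃

/-- Integrable majorant on the line: singular like `|k|^(-11/12)` at the origin and decaying like
`|k|^(-25/24)` at infinity. -/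
def majA (k : ℝ) : ℝ := |k| ^ (-(11 / 12) : ℝ) * (max 1 |k|) ^ (-(1 / 8) : ℝ)

/-- Majorant with a term `(lam k²)⁻¹` for the region without gain. It vanishes at `k = 0`, by the
conventions for inverses and powers of zero; nonresonant interactions never use that value. -/
def majW (lam k : ℝ) : ℝ := majA k + (lam * k ^ 2)⁻¹

lemma majA_nonneg (k : ℝ) : 0 ≤ majA k := by unfold majA; positivity

lemma gainSq_nonneg (lam k₁ k₂ k₃ : ℝ) : 0 ≤ gainSq lam k₁ k₂ k₃ := by
  unfold gainSq resLow; split_ifs <;> positivity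

lemma gainSq_le_one (lam k₁ k₂ k₃ : ℝ) : gainSq lam k₁ k₂ k₃ ≤ 1 := by
  unfold gainSq; split_ifs with h
  · exact inv_le_one_of_one_le₀ h.2
  · rfl

set_option maxHeartbeats 1000000 in
/-- The kernel bound when `|k₃|` is the largest of the three. -/
lemma ker_le_aux {lam k₁ k₂ k₃ : ℝ} (hl : 1 ≤ lam) (h₁ : k₁ ≠ 0) (h₂ : k₂ ≠ 0)
    (h₁₃ : |k₁| ≤ |k₃|) (h₂₃ : |k₂| ≤ |k₃|) :
    ker lam k₁ k₂ k₃ ≤ 6 * (majW lam k₁ * majW lam k₂) := by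
  have p1 : 0 < |k₁| := abs_pos.2 h₁
  have p2 : 0 < |k₂| := abs_pos.2 h₂
  set x := |k₁| with hx
  set y := |k₂| with hy
  set K := |k₃| with hK
  have p3 : 0 < K := p1.trans_le h₁₃
  set Q := k₁ ^ 2 + k₂ ^ 2 + k₃ ^ 2 with hQ
  have hQ' : Q = x ^ 2 + y ^ 2 + K ^ 2 := by simp [hQ, hx, hy, hK]
  have Q1 : K ^ 2 ≤ Q := by rw [hQ']; nlinarith
  have Q2 : Q ≤ 3 * K ^ 2 := by rw [hQ']; nlinarith
  have Q0 : 0 < Q := lt_of_lt_of_le (by positivity) Q1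
  have g0 := gainSq_nonneg lam k₁ k₂ k₃
  have g1 := gainSq_le_one lam k₁ k₂ k₃
  have a1 := majA_nonneg k₁
  have a2 := majA_nonneg k₂
  have hk : ker lam k₁ k₂ k₃ = Q * (1 + Q) ^ (1 / 4 : ℝ) * gainSq lam k₁ k₂ k₃ := rfl
  have w1 : 0 ≤ (lam * k₁ ^ 2)⁻¹ := by positivity
  have w2 : 0 ≤ (lam * k₂ ^ 2)⁻¹ := by positivity
  have four : (4:ℝ) ^ (1 / 4 : ℝ) ≤ 2 := by
    calc (4:ℝ) ^ (1 / 4 : ℝ) = ((2:ℝ) ^ (2:ℝ)) ^ (1 / 4 : ℝ) := by norm_num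
      _ = 2 ^ (1 / 2 : ℝ) := by rw [← rpow_mul (by norm_num)]; norm_num
      _ ≤ 2 ^ (1:ℝ) := rpow_le_rpow_of_exponent_le (by norm_num) (by norm_num)
      _ = 2 := by simp
  rcases le_total K 1 with hK1 | hK1
  · -- low frequencies: the kernel is at most `6`, and `majA` is at least one
    have b : ∀ k : ℝ, 0 < |k| → |k| ≤ 1 → 1 ≤ majA k := fun k hk0 hk1 => by
      unfold majA
      rw [max_eq_left hk1, one_rpow, mul_one]
      exact one_le_rpow_of_pos_of_le_one_of_nonpos hk0 hk1 (by norm_num)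
    have b1 := b k₁ p1 (h₁₃.trans hK1)
    have b2 := b k₂ p2 (h₂₃.trans hK1)
    have : (1 + Q) ^ (1 / 4 : ℝ) ≤ 2 :=
      (rpow_le_rpow (by positivity) (by nlinarith) (by norm_num)).trans four
    have hkk : ker lam k₁ k₂ k₃ ≤ 3 * 2 * 1 := by
      rw [hk]; gcongr; nlinarith
    have : 1 * 1 ≤ majW lam k₁ * majW lam k₂ := by
      unfold majW; gcongr <;> linarith
    linarith
  have pre : Q * (1 + Q) ^ (1 / 4 : ℝ) ≤ 6 * K ^ (5 / 2 : ℝ) := by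
    have e : (1 + Q) ^ (1 / 4 : ℝ) ≤ 2 * K ^ (1 / 2 : ℝ) := by
      calc (1 + Q) ^ (1 / 4 : ℝ) ≤ (4 * K ^ (2:ℝ)) ^ (1 / 4 : ℝ) := by
            apply rpow_le_rpow (by positivity) _ (by norm_num)
            rw [rpow_two]; nlinarith
        _ = 4 ^ (1 / 4 : ℝ) * K ^ (1 / 2 : ℝ) := by
            rw [mul_rpow (by norm_num) (by positivity), ← rpow_mul p3.le]; norm_num
        _ ≤ _ := by gcongr
    calc _ ≤ (3 * K ^ (2:ℝ)) * (2 * K ^ (1 / 2 : ℝ)) := by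
          gcongr; rw [rpow_two]; exact Q2
      _ = 6 * (K ^ (2:ℝ) * K ^ (1 / 2 : ℝ)) := by ring
      _ = _ := by rw [← rpow_add p3]; norm_num
  set h := resLow k₁ k₂ k₃ with hh
  have hh' : h = 5 / 2 * (x * y * K) * Q := by
    simp only [hh, resLow, abs_mul]; rfl
  have hh0 : 0 < h := by rw [hh']; positivity
  -- the power `11/12` of the resonance is enough, and it also covers resonances below one
  have main : gainSq lam k₁ k₂ k₃ ≤ h ^ (-(11 / 12) : ℝ) ∨ lam * h < √Q := by
    by_cases c1 : √Q ≤ lam * h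
    · left
      unfold gainSq
      by_cases c2 : 1 ≤ h
      · rw [if_pos ⟨c1, c2⟩, ← rpow_neg_one]
        exact rpow_le_rpow_of_exponent_le c2 (by norm_num)
      · rw [if_neg (fun c => c2 c.2)]
        exact one_le_rpow_of_pos_of_le_one_of_nonpos hh0 (le_of_not_ge c2) (by norm_num)
    · right; exact not_le.1 c1
  rcases main with c | c
  · have hlow : x * y * K ^ (3:ℝ) ≤ h := by
      rw [hh', show (3:ℝ) = ((3:ℕ):ℝ) by norm_num, rpow_natCast]
      have : x * y * K * K ^ 2 ≤ x * y * K * Q := by gcongr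
      have : 0 ≤ x * y * K * Q := by positivity
      nlinarith
    have c' : gainSq lam k₁ k₂ k₃ ≤
        x ^ (-(11 / 12) : ℝ) * y ^ (-(11 / 12) : ℝ) * K ^ (-(11 / 4) : ℝ) := by
      refine c.trans ((rpow_le_rpow_of_nonpos (by positivity) hlow (by norm_num)).trans_eq ?_)
      rw [mul_rpow (by positivity) (by positivity), mul_rpow p1.le p2.le, ← rpow_mul p3.le]
      norm_num
    have e1 : ∀ z : ℝ, z ≤ K → K ^ (-(1 / 8) : ℝ) ≤ (max 1 z) ^ (-(1 / 8) : ℝ) := fun z hz =>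
      rpow_le_rpow_of_nonpos (by positivity) (max_le hK1 hz) (by norm_num)
    have : ker lam k₁ k₂ k₃ ≤ 6 * (majA k₁ * majA k₂) := by
      calc ker lam k₁ k₂ k₃ ≤ 6 * K ^ (5 / 2 : ℝ) *
            (x ^ (-(11 / 12) : ℝ) * y ^ (-(11 / 12) : ℝ) * K ^ (-(11 / 4) : ℝ)) := by
            rw [hk]; gcongr
        _ = 6 * ((x ^ (-(11 / 12) : ℝ) * K ^ (-(1 / 8) : ℝ)) *
              (y ^ (-(11 / 12) : ℝ) * K ^ (-(1 / 8) : ℝ))) := by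
            have : K ^ (5 / 2 : ℝ) * K ^ (-(11 / 4) : ℝ) =
                K ^ (-(1 / 8) : ℝ) * K ^ (-(1 / 8) : ℝ) := by
              rw [← rpow_add p3, ← rpow_add p3]; norm_num
            linear_combination (6 * x ^ (-(11 / 12) : ℝ) * y ^ (-(11 / 12) : ℝ)) * this
        _ ≤ _ := by
            refine mul_le_mul_of_nonneg_left (mul_le_mul ?_ ?_ (by positivity) a1) (by norm_num)
            · exact mul_le_mul_of_nonneg_left (e1 _ h₁₃) (by positivity)
            · exact mul_le_mul_of_nonneg_left (e1 _ h₂₃) (by positivity)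
    refine this.trans ?_
    unfold majW
    gcongr <;> linarith
  · -- here `lam |k₁| |k₂| K² ≤ 1`
    have hs : √Q * √Q = Q := Real.mul_self_sqrt Q0.le
    have hs0 : 0 < √Q := Real.sqrt_pos.2 Q0
    have hKs : K ≤ √Q := Real.le_sqrt_of_sq_le Q1
    have c1 : lam * (5 / 2 * (x * y * K)) * √Q < 1 := by
      rw [hh'] at c
      have : lam * (5 / 2 * (x * y * K)) * √Q * √Q < 1 * √Q := by
        calc _ = lam * (5 / 2 * (x * y * K)) * (√Q * √Q) := by ring
          _ = lam * (5 / 2 * (x * y * K) * Q) := by rw [hs]; ring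
          _ < _ := by linarith
      exact lt_of_mul_lt_mul_right this hs0.le
    have c2 : lam * x * y * K ^ 2 ≤ 1 := by
      have i1 : lam * x * y * K * K ≤ lam * x * y * K * √Q :=
        mul_le_mul_of_nonneg_left hKs (by positivity)
      have i2 : 0 ≤ lam * x * y * K * √Q := by positivity
      have i3 : lam * (5 / 2 * (x * y * K)) * √Q = 5 / 2 * (lam * x * y * K * √Q) := by ring
      have i4 : lam * x * y * K ^ 2 = lam * x * y * K * K := by ring
      rw [i3] at c1
      rw [i4]
      linarith
    have c3 : K ^ (5 / 2 : ℝ) ≤ (lam * k₁ ^ 2)⁻¹ * (lam * k₂ ^ 2)⁻¹ := by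
      rw [← mul_inv, le_inv_comm₀ (by positivity) (by positivity)]
      have e : K ^ (5 / 2 : ℝ) ≤ K ^ 4 := by
        rw [← rpow_natCast]; exact rpow_le_rpow_of_exponent_le hK1 (by norm_num)
      have e2 : (lam * x * y * K ^ 2) ^ 2 ≤ 1 := pow_le_one₀ (by positivity) c2
      rw [← sq_abs k₁, ← sq_abs k₂, ← one_div, le_div_iff₀ (by positivity)]
      calc _ ≤ lam * x ^ 2 * (lam * y ^ 2) * K ^ 4 := by gcongr
        _ = (lam * x * y * K ^ 2) ^ 2 := by ring
        _ ≤ 1 := e2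
    calc ker lam k₁ k₂ k₃ ≤ 6 * K ^ (5 / 2 : ℝ) * 1 := by rw [hk]; gcongr
      _ ≤ 6 * ((lam * k₁ ^ 2)⁻¹ * (lam * k₂ ^ 2)⁻¹) := by rw [mul_one]; gcongr
      _ ≤ _ := by unfold majW; gcongr <;> linarith

lemma ker_comm₁₂ (lam k₁ k₂ k₃ : ℝ) : ker lam k₁ k₂ k₃ = ker lam k₂ k₁ k₃ := by
  have e : k₁ ^ 2 + k₂ ^ 2 + k₃ ^ 2 = k₂ ^ 2 + k₁ ^ 2 + k₃ ^ 2 := by ring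
  have e' : k₁ * k₂ * k₃ = k₂ * k₁ * k₃ := by ring
  unfold ker gainSq resLow; rw [e, e']

lemma ker_comm₂₃ (lam k₁ k₂ k₃ : ℝ) : ker lam k₁ k₂ k₃ = ker lam k₁ k₃ k₂ := by
  have e : k₁ ^ 2 + k₂ ^ 2 + k₃ ^ 2 = k₁ ^ 2 + k₃ ^ 2 + k₂ ^ 2 := by ring
  have e' : k₁ * k₂ * k₃ = k₁ * k₃ * k₂ := by ring
  unfold ker gainSq resLow; rw [e, e']

/-- Kernel bound without an ordering of the `k`'s: each product of two majorants serves the case in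
which the third frequency is the largest. -/
lemma ker_le {lam k₁ k₂ k₃ : ℝ} (hl : 1 ≤ lam) (h₁ : k₁ ≠ 0) (h₂ : k₂ ≠ 0) (h₃ : k₃ ≠ 0) :
    ker lam k₁ k₂ k₃ ≤ 6 * (majW lam k₁ * majW lam k₂ + majW lam k₁ * majW lam k₃ +
      majW lam k₂ * majW lam k₃) := by
  have n : ∀ k, 0 ≤ majW lam k := fun k => by
    have := majA_nonneg k; unfold majW; positivity
  have n1 := mul_nonneg (n k₁) (n k₂)
  have n2 := mul_nonneg (n k₁) (n k₃)
  have n3 := mul_nonneg (n k₂) (n k₃)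
  rcases le_total |k₁| |k₂| with a | a <;> rcases le_total |k₁| |k₃| with b | b <;>
    rcases le_total |k₂| |k₃| with c | c
  all_goals first
    | (have := ker_le_aux hl h₁ h₂ (by linarith) (by linarith); linarith)
    | (have := ker_le_aux hl h₁ h₃ (k₃ := k₂) (by linarith) (by linarith)
       rw [ker_comm₂₃] at this; linarith)
    | (have := ker_le_aux hl h₂ h₃ (k₃ := k₁) (by linarith) (by linarith)
       rw [ker_comm₂₃, ker_comm₁₂] at this; linarith)

/-! ### Summing the kernel over the nonresonant frequencies -/

lemma majA_antitoneOn : AntitoneOn majA (Ioi 0) := by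
  intro x hx y hy hxy
  unfold majA
  have hx : 0 < x := hx
  have hy : 0 < y := hy
  rw [abs_of_pos hx, abs_of_pos hy]
  refine mul_le_mul ?_ ?_ (by positivity) (by positivity)
  · exact rpow_le_rpow_of_nonpos hx hxy (by norm_num)
  · exact rpow_le_rpow_of_nonpos (by positivity) (max_le_max le_rfl hxy) (by norm_num)

lemma lintegral_majA_lt_top : ∫⁻ x in Ioi (0:ℝ), ENNReal.ofReal (majA x) < ⊤ := by
  have hU : Ioi (0:ℝ) = Ioc 0 1 ∪ Ioi 1 := (Ioc_union_Ioi_eq_Ioi zero_le_one).symm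
  have h1 : IntegrableOn majA (Ioc 0 1) := by
    have : IntervalIntegrable (fun x : ℝ => x ^ (-(11 / 12) : ℝ)) volume 0 1 :=
      intervalIntegral.intervalIntegrable_rpow' (by norm_num)
    rw [intervalIntegrable_iff_integrableOn_Ioc_of_le zero_le_one] at this
    refine this.congr_fun (fun x hx => ?_) measurableSet_Ioc
    simp only [majA]
    rw [abs_of_pos hx.1, max_eq_left hx.2, one_rpow, mul_one]
  have h2 : IntegrableOn majA (Ioi 1) := by
    have : IntegrableOn (fun x : ℝ => x ^ (-(25 / 24) : ℝ)) (Ioi 1) :=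
      integrableOn_Ioi_rpow_of_lt (by norm_num) one_pos
    refine this.congr_fun (fun x hx => ?_) measurableSet_Ioi
    have hx0 : (0:ℝ) < x := lt_trans one_pos hx
    simp only [majA]
    rw [abs_of_pos hx0, max_eq_right (le_of_lt hx), ← rpow_add hx0]
    norm_num
  have h : IntegrableOn majA (Ioi 0) := by rw [hU]; exact h1.union h2
  have := h.2
  rw [hasFiniteIntegral_iff_ofReal (ae_of_all _ majA_nonneg)] at this
  exact this

/-- The lattice sum of `majA` over positive frequencies is comparable to its integral. -/
lemma tsum_majA_le {lam : ℝ} (hl : 1 ≤ lam) :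
    ∑' n : ℕ, ENNReal.ofReal (majA (((n:ℝ) + 1) / lam)) ≤
      ENNReal.ofReal lam * ∫⁻ x in Ioi (0:ℝ), ENNReal.ofReal (majA x) := by
  have hl0 : 0 < lam := by linarith
  have hmono : Monotone (fun n : ℕ => (n:ℝ) / lam) := fun i j hij => by
    simp only; gcongr
  have hterm : ∀ n : ℕ, ENNReal.ofReal (majA (((n:ℝ) + 1) / lam)) ≤
      ENNReal.ofReal lam * ∫⁻ x in Ioc ((n:ℝ) / lam) (((n + 1 : ℕ):ℝ) / lam),
        ENNReal.ofReal (majA x) := by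
    intro n
    have hv : volume (Ioc ((n:ℝ) / lam) (((n + 1 : ℕ):ℝ) / lam)) = ENNReal.ofReal lam⁻¹ := by
      rw [Real.volume_Ioc]; congr 1; push_cast; field_simp; ring
    have := setLIntegral_mono' (μ := volume) measurableSet_Ioc
      (s := Ioc ((n:ℝ) / lam) (((n + 1 : ℕ):ℝ) / lam))
      (f := fun _ => ENNReal.ofReal (majA (((n:ℝ) + 1) / lam)))
      (g := fun x => ENNReal.ofReal (majA x)) (fun x hx => by
        apply ENNReal.ofReal_le_ofReal
        have hx0 : 0 < x := lt_of_le_of_lt (by positivity) hx.1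
        apply majA_antitoneOn hx0
        · show (0:ℝ) < _
          positivity
        · simpa using hx.2)
    rw [setLIntegral_const, hv] at this
    calc _ = ENNReal.ofReal lam * (ENNReal.ofReal (majA (((n:ℝ) + 1) / lam)) *
          ENNReal.ofReal lam⁻¹) := by
          rw [mul_comm (ENNReal.ofReal (majA _)), ← mul_assoc, ← ENNReal.ofReal_mul hl0.le,
            mul_inv_cancel₀ hl0.ne', ENNReal.ofReal_one, one_mul]
      _ ≤ _ := by gcongr
  calc _ ≤ ∑' n : ℕ, ENNReal.ofReal lam *
        ∫⁻ x in Ioc ((n:ℝ) / lam) (((n + 1 : ℕ):ℝ) / lam), ENNReal.ofReal (majA x) :=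
        ENNReal.tsum_le_tsum hterm
    _ = ENNReal.ofReal lam * ∫⁻ x in ⋃ n : ℕ, Ioc ((n:ℝ) / lam) (((n + 1 : ℕ):ℝ) / lam),
          ENNReal.ofReal (majA x) := by
        rw [ENNReal.tsum_mul_left, lintegral_iUnion (fun _ => measurableSet_Ioc)]
        have := hmono.pairwise_disjoint_on_Ioc_succ
        simpa using this
    _ ≤ _ := by
        gcongr
        refine iUnion_subset fun n x hx => ?_
        exact lt_of_le_of_lt (by positivity) hx.1

lemma majW_neg (lam k : ℝ) : majW lam (-k) = majW lam k := by simp [majW, majA]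

lemma majW_nonneg {lam : ℝ} (hl : 0 ≤ lam) (k : ℝ) : 0 ≤ majW lam k := by
  have := majA_nonneg k; unfold majW; positivity

/-- Lattice sums of the majorant grow at most linearly in the period. -/
lemma tsum_majW_le : ∃ C : ℝ, 0 < C ∧ ∀ lam : ℝ, 1 ≤ lam →
    ∑' κ : ℤ, ENNReal.ofReal (majW lam ((κ:ℝ) / lam)) ≤ ENNReal.ofReal (C * lam) := by
  set I := ∫⁻ x in Ioi (0:ℝ), ENNReal.ofReal (majA x) with hI
  have hsum : Summable fun n : ℕ => 1 / ((n:ℝ) + 1) ^ 2 := by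
    have := (summable_nat_add_iff 1).2 (Real.summable_one_div_nat_pow.2 one_lt_two)
    simpa using this
  set J : ℝ := ∑' n : ℕ, 1 / ((n:ℝ) + 1) ^ 2 with hJ
  have hJ0 : 0 ≤ J := tsum_nonneg fun n => by positivity
  refine ⟨2 * (I.toReal + J) + 1, by positivity, fun lam hl => ?_⟩
  have hl0 : 0 < lam := by linarith
  have hhalf : ∑' n : ℕ, ENNReal.ofReal (majW lam (((n:ℝ) + 1) / lam)) ≤
      ENNReal.ofReal ((I.toReal + J) * lam) := by
    have e : ∀ n : ℕ, ENNReal.ofReal (majW lam (((n:ℝ) + 1) / lam)) =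
        ENNReal.ofReal (majA (((n:ℝ) + 1) / lam)) +
          ENNReal.ofReal lam * ENNReal.ofReal (1 / ((n:ℝ) + 1) ^ 2) := by
      intro n
      rw [← ENNReal.ofReal_mul hl0.le, ← ENNReal.ofReal_add (majA_nonneg _) (by positivity)]
      congr 1
      unfold majW
      congr 1
      field_simp
    simp_rw [e]
    rw [ENNReal.tsum_add, ENNReal.tsum_mul_left,
      ← ENNReal.ofReal_tsum_of_nonneg (fun n => by positivity) hsum, ← hJ]
    calc _ ≤ ENNReal.ofReal lam * I + ENNReal.ofReal lam * ENNReal.ofReal J := by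
          gcongr; exact tsum_majA_le hl
      _ = ENNReal.ofReal lam * ENNReal.ofReal I.toReal + ENNReal.ofReal lam * ENNReal.ofReal J := by
          rw [ENNReal.ofReal_toReal lintegral_majA_lt_top.ne]
      _ = _ := by
          rw [← mul_add, ← ENNReal.ofReal_add ENNReal.toReal_nonneg hJ0,
            ← ENNReal.ofReal_mul hl0.le, mul_comm]
  rw [tsum_of_nat_of_neg_add_one ENNReal.summable ENNReal.summable,
    tsum_eq_zero_add' ENNReal.summable]
  have z : majW lam (((0:ℕ):ℤ) / lam) = 0 := by
    simp [majW, majA]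
  have e2 : ∀ n : ℕ, majW lam (((-((n:ℤ) + 1) : ℤ):ℝ) / lam) = majW lam (((n:ℝ) + 1) / lam) := by
    intro n; rw [← majW_neg]; congr 1; push_cast; ring
  have e3 : ∀ n : ℕ, majW lam ((((n + 1 : ℕ):ℤ):ℝ) / lam) = majW lam (((n:ℝ) + 1) / lam) := by
    intro n; congr 1; push_cast; ring
  simp_rw [e2, e3]
  rw [z, ENNReal.ofReal_zero, zero_add]
  calc _ ≤ ENNReal.ofReal ((I.toReal + J) * lam) + ENNReal.ofReal ((I.toReal + J) * lam) := by
        gcongr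
    _ = ENNReal.ofReal (2 * (I.toReal + J) * lam) := by
        rw [← ENNReal.ofReal_add (by positivity) (by positivity)]; congr 1; ring
    _ ≤ _ := ENNReal.ofReal_le_ofReal (by nlinarith)

/-- The nonresonance condition on the frequencies `q.1, q.2, m - q.1 - q.2` of output `m`. -/
def NR (m : ℤ) (q : ℤ × ℤ) : Prop :=
  q.1 + q.2 ≠ 0 ∧ q.2 + (m - q.1 - q.2) ≠ 0 ∧ (m - q.1 - q.2) + q.1 ≠ 0

instance (m : ℤ) : DecidablePred (NR m) := fun q => by unfold NR; infer_instance

/-- The kernel `ker` at the frequencies `q.1, q.2, m - q.1 - q.2`. -/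
def kerZ (lam : ℝ) (m : ℤ) (q : ℤ × ℤ) : ℝ :=
  ker lam (((q.1 + q.2 : ℤ):ℝ) / lam) (((m - q.1 : ℤ):ℝ) / lam) (((m - q.2 : ℤ):ℝ) / lam)

lemma tsum_pair_le (f : ℤ → ℝ≥0∞) {e : ℤ × ℤ → ℤ × ℤ} (he : Function.Injective e) :
    ∑' q, f (e q).1 * f (e q).2 ≤ (∑' κ, f κ) * ∑' κ, f κ := by
  calc _ ≤ ∑' p : ℤ × ℤ, f p.1 * f p.2 :=
        ENNReal.tsum_comp_le_tsum_of_injective he (fun p => f p.1 * f p.2)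
    _ = _ := by
        rw [ENNReal.tsum_prod']
        simp_rw [ENNReal.tsum_mul_left, ENNReal.tsum_mul_right]

/-- The Schur bound, uniform in the output frequency `m`: on the nonresonant set any two of
the three pairwise sums are independent coordinates, so the double sum is at most a product of two
lattice sums of `majW`. -/
lemma tsum_kerZ_le : ∃ C : ℝ, 0 < C ∧ ∀ lam : ℝ, 1 ≤ lam → ∀ m : ℤ,
    ∑' q : ℤ × ℤ, (if NR m q then ENNReal.ofReal (kerZ lam m q) else 0) ≤
      ENNReal.ofReal (C * lam ^ 2) := by
  obtain ⟨C, hC, hW⟩ := tsum_majW_le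
  refine ⟨18 * C ^ 2, by positivity, fun lam hl m => ?_⟩
  have hl0 : 0 < lam := by linarith
  set f : ℤ → ℝ≥0∞ := fun κ => ENNReal.ofReal (majW lam ((κ:ℝ) / lam)) with hf
  have hterm : ∀ q : ℤ × ℤ, (if NR m q then ENNReal.ofReal (kerZ lam m q) else 0) ≤
      6 * (f (q.1 + q.2) * f (m - q.1) + f (q.1 + q.2) * f (m - q.2) + f (m - q.1) * f (m - q.2)) := by
    intro q
    split_ifs with h
    · obtain ⟨h1, h2, h3⟩ := h
      have n : ∀ κ : ℤ, 0 ≤ majW lam ((κ:ℝ) / lam) := fun κ => majW_nonneg hl0.le _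
      have nz : ∀ κ : ℤ, κ ≠ 0 → (κ:ℝ) / lam ≠ 0 := fun κ hκ =>
        div_ne_zero (Int.cast_ne_zero.2 hκ) hl0.ne'
      have := ker_le hl (nz _ h1) (nz (m - q.1) (by omega)) (nz (m - q.2) (by omega))
      simp only [hf]
      rw [← ENNReal.ofReal_mul (n _), ← ENNReal.ofReal_mul (n _), ← ENNReal.ofReal_mul (n _),
        ← ENNReal.ofReal_add (mul_nonneg (n _) (n _)) (mul_nonneg (n _) (n _)),
        ← ENNReal.ofReal_add (add_nonneg (mul_nonneg (n _) (n _)) (mul_nonneg (n _) (n _)))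
          (mul_nonneg (n _) (n _)), show (6:ℝ≥0∞) = ENNReal.ofReal 6 by norm_num,
        ← ENNReal.ofReal_mul (by norm_num)]
      exact ENNReal.ofReal_le_ofReal this
    · exact zero_le
  have i1 := tsum_pair_le f (e := fun q => (q.1 + q.2, m - q.1)) (fun p q h => by
    simp only [Prod.mk.injEq] at h; ext <;> omega)
  have i2 := tsum_pair_le f (e := fun q => (q.1 + q.2, m - q.2)) (fun p q h => by
    simp only [Prod.mk.injEq] at h; ext <;> omega)
  have i3 := tsum_pair_le f (e := fun q => (m - q.1, m - q.2)) (fun p q h => by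
    simp only [Prod.mk.injEq] at h; ext <;> omega)
  have hb : (∑' κ, f κ) * ∑' κ, f κ ≤ ENNReal.ofReal ((C * lam) * (C * lam)) := by
    rw [ENNReal.ofReal_mul (by positivity)]; gcongr <;> exact hW lam hl
  calc _ ≤ _ := ENNReal.tsum_le_tsum hterm
    _ ≤ 6 * (ENNReal.ofReal ((C * lam) * (C * lam)) + ENNReal.ofReal ((C * lam) * (C * lam)) +
          ENNReal.ofReal ((C * lam) * (C * lam))) := by
        rw [ENNReal.tsum_mul_left, ENNReal.tsum_add, ENNReal.tsum_add]
        gcongr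
        · exact i1.trans hb
        · exact i2.trans hb
        · exact i3.trans hb
    _ = _ := by
        rw [show (6:ℝ≥0∞) = ENNReal.ofReal 6 by norm_num,
          ← ENNReal.ofReal_add (by positivity) (by positivity),
          ← ENNReal.ofReal_add (by positivity) (by positivity),
          ← ENNReal.ofReal_mul (by norm_num)]
        congr 1; ring

/-! ### The weighted trilinear estimate -/

/-- The oscillatory gain `gainSq` at the frequencies `q.1, q.2, m - q.1 - q.2`. -/
def gainZ (lam : ℝ) (m : ℤ) (q : ℤ × ℤ) : ℝ :=
  gainSq lam (((q.1 + q.2 : ℤ):ℝ) / lam) (((m - q.1 : ℤ):ℝ) / lam) (((m - q.2 : ℤ):ℝ) / lam)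

/-- The sum of squares of the three pairwise frequency sums. -/
def QZ (lam : ℝ) (m : ℤ) (q : ℤ × ℤ) : ℝ :=
  (((q.1 + q.2 : ℤ):ℝ) / lam) ^ 2 + (((m - q.1 : ℤ):ℝ) / lam) ^ 2 + (((m - q.2 : ℤ):ℝ) / lam) ^ 2

lemma QZ_eq (lam : ℝ) (m : ℤ) (q : ℤ × ℤ) :
    QZ lam m q = ((q.1:ℝ) / lam) ^ 2 + ((q.2:ℝ) / lam) ^ 2 +
      (((m - q.1 - q.2 : ℤ):ℝ) / lam) ^ 2 + ((m:ℝ) / lam) ^ 2 := by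
  unfold QZ; push_cast; ring

lemma kerZ_eq (lam : ℝ) (m : ℤ) (q : ℤ × ℤ) :
    kerZ lam m q = QZ lam m q * (1 + QZ lam m q) ^ (1 / 4 : ℝ) * gainZ lam m q := rfl

/-- The trilinear form dominating the time-integrated nonlinearity. -/
def triT (lam : ℝ) (B : ℤ → ℝ≥0∞) (m : ℤ) : ℝ≥0∞ :=
  ∑' q : ℤ × ℤ, if NR m q then
    ENNReal.ofReal (√(gainZ lam m q)) * (B q.1 * B q.2 * B (m - q.1 - q.2)) else 0

/-- The weighted square sum of a sequence of amplitudes. -/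
def wsum (lam s : ℝ) (B : ℤ → ℝ≥0∞) : ℝ≥0∞ :=
  ∑' m : ℤ, ENNReal.ofReal (jb2 ((m:ℝ) / lam) ^ s) * B m ^ 2

lemma jb2_pos (x : ℝ) : 0 < jb2 x := by unfold jb2; positivity

/-- The additive constant that absorbs the low frequencies in `weight_le`. -/
def lowC (s : ℝ) : ℝ := if 0 ≤ s then ((9:ℝ) ^ s) ^ (4 * s) else 0

lemma lowC_nonneg (s : ℝ) : 0 ≤ lowC s := by unfold lowC; split_ifs <;> positivity

lemma lowC_eq_zero {s : ℝ} (hs : s < 0) : lowC s = 0 := if_neg (not_le.2 hs)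

/-- Distribution of the Sobolev weight over the three inputs: the loss is a quarter power of `Q`. -/
lemma weight_le {s n n₁ n₂ n₃ Q : ℝ} (hs : -(1 / 4) < s) (hn : n = n₁ + n₂ + n₃)
    (hQ : Q = n₁ ^ 2 + n₂ ^ 2 + n₃ ^ 2 + n ^ 2) :
    jb2 n ^ s ≤ (1 + Q) ^ (1 / 4 : ℝ) * (jb2 n₁ ^ s + jb2 n₂ ^ s + jb2 n₃ ^ s + lowC s) := by
  have Q0 : 0 ≤ Q := by rw [hQ]; positivity
  have P1 : 1 ≤ (1 + Q) ^ (1 / 4 : ℝ) := one_le_rpow (by linarith) (by norm_num)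
  have r1 := rpow_nonneg (jb2_pos n₁).le s
  have r2 := rpow_nonneg (jb2_pos n₂).le s
  have r3 := rpow_nonneg (jb2_pos n₃).le s
  have hD := lowC_nonneg s
  rcases lt_or_ge s 0 with h | h
  · have e1 : jb2 n ^ s ≤ 1 :=
      rpow_le_one_of_one_le_of_nonpos (by unfold jb2; nlinarith) h.le
    have e2 : 1 ≤ (1 + Q) ^ (1 / 4 : ℝ) * jb2 n₁ ^ s := by
      calc (1:ℝ) ≤ (1 + Q) ^ (1 / 4 + s) := one_le_rpow (by linarith) (by linarith)
        _ = (1 + Q) ^ (1 / 4 : ℝ) * (1 + Q) ^ s := rpow_add (by linarith) _ _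
        _ ≤ _ := by
          refine mul_le_mul_of_nonneg_left ?_ (by positivity)
          refine rpow_le_rpow_of_nonpos (jb2_pos _) ?_ h.le
          unfold jb2; nlinarith [sq_nonneg n₂, sq_nonneg n₃, sq_nonneg n]
    have e3 : (1 + Q) ^ (1 / 4 : ℝ) * jb2 n₁ ^ s ≤
        (1 + Q) ^ (1 / 4 : ℝ) * (jb2 n₁ ^ s + jb2 n₂ ^ s + jb2 n₃ ^ s + lowC s) :=
      mul_le_mul_of_nonneg_left (by linarith) (by positivity)
    linarith
  · have hmax : jb2 n ^ s ≤ 9 ^ s * (jb2 n₁ ^ s + jb2 n₂ ^ s + jb2 n₃ ^ s) := by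
      have key : ∀ x, jb2 n ≤ 9 * jb2 x → jb2 n ^ s ≤ 9 ^ s * jb2 x ^ s := fun x hx => by
        rw [← mul_rpow (by norm_num) (jb2_pos x).le]
        exact rpow_le_rpow (jb2_pos n).le hx h
      have p9 : (0:ℝ) < 9 ^ s := by positivity
      have m1 := mul_nonneg p9.le r1
      have m2 := mul_nonneg p9.le r2
      have m3 := mul_nonneg p9.le r3
      rw [mul_add, mul_add]
      have big : jb2 n ≤ 9 * jb2 n₁ ∨ jb2 n ≤ 9 * jb2 n₂ ∨ jb2 n ≤ 9 * jb2 n₃ := by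
        by_contra! hc
        simp only [jb2] at hc
        obtain ⟨c1, c2, c3⟩ := hc
        rw [hn] at c1 c2 c3
        nlinarith [sq_nonneg (n₁ - n₂), sq_nonneg (n₂ - n₃), sq_nonneg (n₁ - n₃)]
      rcases big with b | b | b
      · linarith [key _ b]
      · linarith [key _ b]
      · linarith [key _ b]
    rcases le_total ((9:ℝ) ^ s) ((1 + Q) ^ (1 / 4 : ℝ)) with c | c
    · refine hmax.trans (mul_le_mul c (by linarith) (by positivity) (by positivity))
    · have e1 : jb2 n ^ s ≤ lowC s := by
        calc jb2 n ^ s ≤ (1 + Q) ^ s :=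
              rpow_le_rpow (jb2_pos n).le (by unfold jb2; rw [hQ]; nlinarith [sq_nonneg n₁, sq_nonneg n₂, sq_nonneg n₃]) h
          _ = ((1 + Q) ^ (1 / 4 : ℝ)) ^ (4 * s) := by
              rw [← rpow_mul (by linarith)]; congr 1; ring
          _ ≤ ((9:ℝ) ^ s) ^ (4 * s) := rpow_le_rpow (by positivity) c (by positivity)
          _ = lowC s := (if_pos h).symm
      have e3 : lowC s ≤ jb2 n₁ ^ s + jb2 n₂ ^ s + jb2 n₃ ^ s + lowC s := by linarith
      exact (e1.trans e3).trans (le_mul_of_one_le_left (by linarith) P1)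

/-- Cauchy–Schwarz for extended nonnegative series. -/
lemma tsum_mul_sq_le {ι : Type*} (f g : ι → ℝ≥0∞) :
    (∑' i, f i * g i) ^ 2 ≤ (∑' i, f i ^ 2) * ∑' i, g i ^ 2 := by
  have h : ∑' i, f i * g i ≤ (∑' i, f i ^ 2) ^ (1 / 2 : ℝ) * (∑' i, g i ^ 2) ^ (1 / 2 : ℝ) := by
    rw [ENNReal.tsum_eq_iSup_sum]
    refine iSup_le fun S => ?_
    refine (ENNReal.inner_le_Lp_mul_Lq S f g Real.HolderConjugate.two_two).trans ?_
    simp only [ENNReal.rpow_two]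
    gcongr
    · exact ENNReal.sum_le_tsum S
    · exact ENNReal.sum_le_tsum S
  calc _ ≤ ((∑' i, f i ^ 2) ^ (1 / 2 : ℝ) * (∑' i, g i ^ 2) ^ (1 / 2 : ℝ)) ^ 2 := by gcongr
    _ = _ := by
      rw [mul_pow, ← ENNReal.rpow_natCast, ← ENNReal.rpow_natCast, ← ENNReal.rpow_mul,
        ← ENNReal.rpow_mul]
      norm_num

lemma tsum_conv (F G H : ℤ → ℝ≥0∞) :
    ∑' m : ℤ, ∑' q : ℤ × ℤ, F q.1 * G q.2 * H (m - q.1 - q.2) =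
      (∑' m, F m) * (∑' m, G m) * ∑' m, H m := by
  rw [ENNReal.tsum_comm]
  have e : ∀ a b : ℤ, ∑' m : ℤ, H (m - a - b) = ∑' m, H m := fun a b =>
    ((Equiv.subRight a).trans (Equiv.subRight b)).tsum_eq H
  simp_rw [ENNReal.tsum_mul_left, e, ENNReal.tsum_mul_right]
  rw [ENNReal.tsum_prod']
  simp_rw [ENNReal.tsum_mul_left, ENNReal.tsum_mul_right]

/-- The trilinear estimate behind the energy inequality: a kernel bound of Schur type combined
with Cauchy–Schwarz. -/
lemma trilinear : ∃ C : ℝ, 0 < C ∧ ∀ s : ℝ, -(1 / 4) < s → ∀ lam : ℝ, 1 ≤ lam →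
    ∀ B : ℤ → ℝ≥0∞,
    ∑' m : ℤ, ENNReal.ofReal (jb2 ((m:ℝ) / lam) ^ s) *
        (ENNReal.ofReal |(m:ℝ) / lam| * triT lam B m) ^ 2 ≤
      ENNReal.ofReal (C * lam ^ 2) *
        ((3 * wsum lam s B + ENNReal.ofReal (lowC s) * wsum lam 0 B) * wsum lam 0 B ^ 2) := by
  obtain ⟨C, hC, hK⟩ := tsum_kerZ_le
  refine ⟨C, hC, fun s hs lam hl B => ?_⟩
  set U : ℤ → ℝ := fun κ => jb2 ((κ:ℝ) / lam) ^ s with hU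
  have hU0 : ∀ κ, 0 ≤ U κ := fun κ => rpow_nonneg (jb2_pos _).le _
  have hD := lowC_nonneg s
  set W : ℤ → ℤ × ℤ → ℝ := fun m q => U q.1 + U q.2 + U (m - q.1 - q.2) + lowC s with hW
  have hW0 : ∀ m q, 0 ≤ W m q := fun m q => by
    have := hU0 q.1; have := hU0 q.2; have := hU0 (m - q.1 - q.2)
    simp only [hW]; positivity
  have hQ0 : ∀ m q, 0 ≤ QZ lam m q := fun m q => by unfold QZ; positivity
  have hg0 : ∀ m q, 0 ≤ gainZ lam m q := fun m q => gainSq_nonneg _ _ _ _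
  have hk0 : ∀ m q, 0 ≤ kerZ lam m q := fun m q => by
    rw [kerZ_eq]; exact mul_nonneg (mul_nonneg (hQ0 m q) (rpow_nonneg (by linarith [hQ0 m q]) _)) (hg0 m q)
  have hscal : ∀ m q, √(U m) * |(m:ℝ) / lam| * √(gainZ lam m q) ≤ √(kerZ lam m q) * √(W m q) := by
    intro m q
    rw [← Real.sqrt_sq_eq_abs, ← Real.sqrt_mul (hU0 m),
      ← Real.sqrt_mul (mul_nonneg (hU0 m) (sq_nonneg _)), ← Real.sqrt_mul (hk0 m q)]
    apply Real.sqrt_le_sqrt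
    have e1 : ((m:ℝ) / lam) ^ 2 ≤ QZ lam m q := by
      rw [QZ_eq]
      nlinarith [sq_nonneg ((q.1:ℝ) / lam), sq_nonneg ((q.2:ℝ) / lam),
        sq_nonneg (((m - q.1 - q.2 : ℤ):ℝ) / lam)]
    have e2 : U m ≤ (1 + QZ lam m q) ^ (1 / 4 : ℝ) * W m q :=
      weight_le hs (by push_cast; ring) (QZ_eq lam m q)
    calc U m * ((m:ℝ) / lam) ^ 2 * gainZ lam m q
        ≤ (1 + QZ lam m q) ^ (1 / 4 : ℝ) * W m q * QZ lam m q * gainZ lam m q :=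
          mul_le_mul_of_nonneg_right (mul_le_mul e2 e1 (sq_nonneg _)
            (mul_nonneg (rpow_nonneg (by linarith [hQ0 m q]) _) (hW0 m q))) (hg0 m q)
      _ = _ := by rw [kerZ_eq]; ring
  set f : ℤ → ℤ × ℤ → ℝ≥0∞ := fun m q => if NR m q then ENNReal.ofReal (√(kerZ lam m q)) else 0
    with hf
  set g : ℤ → ℤ × ℤ → ℝ≥0∞ := fun m q =>
    ENNReal.ofReal (√(W m q)) * (B q.1 * B q.2 * B (m - q.1 - q.2)) with hg
  have hstep : ∀ m, ENNReal.ofReal (U m) * (ENNReal.ofReal |(m:ℝ) / lam| * triT lam B m) ^ 2 ≤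
      ENNReal.ofReal (C * lam ^ 2) * ∑' q, g m q ^ 2 := by
    intro m
    have h1 : ENNReal.ofReal (U m) = ENNReal.ofReal (√(U m)) ^ 2 := by
      rw [← ENNReal.ofReal_pow (Real.sqrt_nonneg _), Real.sq_sqrt (hU0 m)]
    rw [h1, ← mul_pow, ← mul_assoc, ← ENNReal.ofReal_mul (Real.sqrt_nonneg _)]
    have h2 : ENNReal.ofReal (√(U m) * |(m:ℝ) / lam|) * triT lam B m ≤ ∑' q, f m q * g m q := by
      unfold triT
      rw [← ENNReal.tsum_mul_left]
      refine ENNReal.tsum_le_tsum fun q => ?_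
      by_cases hq : NR m q
      · simp only [hf, hg, if_pos hq]
        rw [← mul_assoc, ← ENNReal.ofReal_mul (by positivity),
          ← mul_assoc (ENNReal.ofReal √(kerZ lam m q)), ← ENNReal.ofReal_mul (by positivity)]
        exact mul_le_mul_left (ENNReal.ofReal_le_ofReal (hscal m q)) _
      · simp [hf, hq]
    calc _ ≤ (∑' q, f m q * g m q) ^ 2 := by gcongr
      _ ≤ (∑' q, f m q ^ 2) * ∑' q, g m q ^ 2 := tsum_mul_sq_le _ _
      _ ≤ _ := by
        gcongr
        refine le_trans (ENNReal.tsum_le_tsum fun q => ?_) (hK lam hl m)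
        by_cases hq : NR m q
        · simp only [hf, if_pos hq]
          rw [← ENNReal.ofReal_pow (Real.sqrt_nonneg _), Real.sq_sqrt (hk0 m q)]
        · simp [hf, hq]
  refine (ENNReal.tsum_le_tsum hstep).trans ?_
  rw [ENNReal.tsum_mul_left]
  gcongr
  set b : ℤ → ℝ≥0∞ := fun κ => B κ ^ 2 with hb
  set v : ℤ → ℝ≥0∞ := fun κ => ENNReal.ofReal (U κ) * B κ ^ 2 with hv
  have hg2 : ∀ m q, g m q ^ 2 = v q.1 * b q.2 * b (m - q.1 - q.2) +
      b q.1 * v q.2 * b (m - q.1 - q.2) + b q.1 * b q.2 * v (m - q.1 - q.2) +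
      ENNReal.ofReal (lowC s) * (b q.1 * b q.2 * b (m - q.1 - q.2)) := by
    intro m q
    simp only [hg, hb, hv]
    rw [mul_pow, ← ENNReal.ofReal_pow (Real.sqrt_nonneg _), Real.sq_sqrt (hW0 m q)]
    simp only [hW]
    rw [ENNReal.ofReal_add (by have := hU0 q.1; have := hU0 q.2; have := hU0 (m - q.1 - q.2); positivity) hD,
      ENNReal.ofReal_add (add_nonneg (hU0 _) (hU0 _)) (hU0 _), ENNReal.ofReal_add (hU0 _) (hU0 _)]
    ring
  simp_rw [hg2, ENNReal.tsum_add, ENNReal.tsum_mul_left, tsum_conv]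
  have e0 : wsum lam 0 B = ∑' κ, b κ := by simp [wsum, hb]
  have es : wsum lam s B = ∑' κ, v κ := rfl
  rw [e0, es]
  exact le_of_eq (by ring)

/-! ### Bounding one nonresonant interaction -/

/-- The time-dependent phase speed of the mode `m` with amplitude `y`: the linear dispersion
relation together with the self-interaction term. -/
def qph (β γ μ lam : ℝ) (m : ℤ) (y : ℂ) : ℝ :=
  ((m:ℝ) / lam) ^ 5 + β * (lam ^ 2)⁻¹ * ((m:ℝ) / lam) ^ 3 - γ * ((m:ℝ) / lam) -
    μ * ((m:ℝ) / lam) / (2 * π * lam) ^ 2 * ‖y‖ ^ 2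

lemma norm_mul3_sub_le {x y z x' y' z' : ℂ} {A B C r : ℝ} (hA : 0 ≤ A) (hB : 0 ≤ B)
    (hy' : ‖y'‖ ≤ B) (hy : ‖y‖ ≤ B) (hx' : ‖x'‖ ≤ A) (hz : ‖z‖ ≤ C)
    (dx : ‖x - x'‖ ≤ A * r) (dy : ‖y - y'‖ ≤ B * r) (dz : ‖z - z'‖ ≤ C * r) :
    ‖x * y * z - x' * y' * z'‖ ≤ 3 * (A * B * C) * r := by
  have e : x * y * z - x' * y' * z' =
      (x - x') * y * z + x' * (y - y') * z + x' * y' * (z - z') := by ring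
  have hBr : 0 ≤ B * r := (norm_nonneg _).trans dy
  have hAr : 0 ≤ A * r := (norm_nonneg _).trans dx
  rw [e]
  calc _ ≤ ‖x - x'‖ * ‖y‖ * ‖z‖ + ‖x'‖ * ‖y - y'‖ * ‖z‖ + ‖x'‖ * ‖y'‖ * ‖z - z'‖ := by
        refine (norm_add₃_le).trans ?_
        simp only [norm_mul]; rfl
    _ ≤ (A * r) * B * C + A * (B * r) * C + A * B * (C * r) := by gcongr
    _ = _ := by ring

lemma abs_norm_sq_sub_le {x y : ℂ} {A r : ℝ} (hx : ‖x‖ ≤ A) (hy : ‖y‖ ≤ A)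
    (d : ‖x - y‖ ≤ A * r) : |‖x‖ ^ 2 - ‖y‖ ^ 2| ≤ 2 * A ^ 2 * r := by
  have e : ‖x‖ ^ 2 - ‖y‖ ^ 2 = (‖x‖ - ‖y‖) * (‖x‖ + ‖y‖) := by ring
  rw [e, abs_mul, abs_of_nonneg (by positivity : 0 ≤ ‖x‖ + ‖y‖)]
  have h1 := abs_norm_sub_norm_le x y
  have h2 : 0 ≤ A * r := (norm_nonneg _).trans d
  calc _ ≤ (A * r) * (A + A) :=
        mul_le_mul (h1.trans d) (add_le_add hx hy) (by positivity) h2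
    _ = _ := by ring

set_option maxHeartbeats 1000000 in
/-- Time integral of one nonresonant interaction: the phase oscillates with speed at least
`resLow`, unless the frequencies fall in the region where `gainSq = 1`. -/
lemma term_bound {β γ μ lam : ℝ} (hβ : 0 ≤ β) (hμ : |μ| = 1) (hl : 1 ≤ lam)
    {v : ℤ → ℝ → ℂ} {P : ℤ → ℝ → ℝ} {A : ℤ → ℝ} {T : ℝ} (hT : T ≤ 1)
    (hv : ∀ m, Continuous (v m))
    (hP : ∀ m t, HasDerivAt (P m) (qph β γ μ lam m (v m t)) t)
    (hA : ∀ m, ∀ t ∈ Icc 0 T, ‖v m t‖ ≤ A m)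
    (hA' : ∀ m, ∀ t ∈ Icc 0 T, ∀ t' ∈ Icc 0 T, ‖v m t - v m t'‖ ≤ A m * √|t - t'|)
    (hA0 : ∀ m, 0 ≤ A m) (hA1 : ∀ m, A m ^ 2 ≤ lam) {m : ℤ} {q : ℤ × ℤ}
    {a b : ℝ} (ha : 0 ≤ a) (hab : a ≤ b) (hb : b ≤ T) :
    ‖∫ t in a..b, Complex.exp (Complex.I *
        ((P q.1 t + P q.2 t + P (m - q.1 - q.2) t - P m t : ℝ) : ℂ)) *
        (v q.1 t * v q.2 t * v (m - q.1 - q.2) t)‖ ≤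
      90 * (√(gainZ lam m q) * (A q.1 * A q.2 * A (m - q.1 - q.2))) * √(b - a) := by
  have hl0 : 0 < lam := by linarith
  set q3 := m - q.1 - q.2 with hq3
  set G := A q.1 * A q.2 * A q3 with hG
  have hG0 : 0 ≤ G := mul_nonneg (mul_nonneg (hA0 _) (hA0 _)) (hA0 _)
  have hsub : ∀ t ∈ Icc a b, t ∈ Icc 0 T := fun t ht => ⟨ha.trans ht.1, ht.2.trans hb⟩
  have hgb : ∀ t ∈ Icc a b, ‖v q.1 t * v q.2 t * v q3 t‖ ≤ G := fun t ht => by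
    rw [norm_mul, norm_mul]
    exact mul_le_mul (mul_le_mul (hA _ t (hsub t ht)) (hA _ t (hsub t ht)) (norm_nonneg _) (hA0 _))
      (hA _ t (hsub t ht)) (norm_nonneg _) (mul_nonneg (hA0 _) (hA0 _))
  have hba : b - a ≤ 1 := by linarith
  have hs0 := Real.sqrt_nonneg (b - a)
  by_cases hc : √(QZ lam m q) ≤ lam * resLow (((q.1 + q.2 : ℤ):ℝ) / lam)
      (((m - q.1 : ℤ):ℝ) / lam) (((m - q.2 : ℤ):ℝ) / lam) ∧ 1 ≤ resLow (((q.1 + q.2 : ℤ):ℝ) / lam)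
      (((m - q.1 : ℤ):ℝ) / lam) (((m - q.2 : ℤ):ℝ) / lam)
  · have hgain : gainZ lam m q = (resLow (((q.1 + q.2 : ℤ):ℝ) / lam)
      (((m - q.1 : ℤ):ℝ) / lam) (((m - q.2 : ℤ):ℝ) / lam))⁻¹ := by
      unfold gainZ gainSq; exact if_pos hc
    set h := resLow (((q.1 + q.2 : ℤ):ℝ) / lam)
      (((m - q.1 : ℤ):ℝ) / lam) (((m - q.2 : ℤ):ℝ) / lam) with hh
    obtain ⟨hc1, hc2⟩ := hc
    set Q := QZ lam m q with hQ
    set kk := ((q.1 + q.2 : ℤ):ℝ) / lam * (((m - q.1 : ℤ):ℝ) / lam) * (((m - q.2 : ℤ):ℝ) / lam)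
      with hkk
    have hQ0 : 0 ≤ Q := by rw [hQ]; unfold QZ; positivity
    set H0 := -(kk * (5 / 2 * Q + 3 * (β * (lam ^ 2)⁻¹))) with hH0
    have hhH : h ≤ |H0| := by
      rw [hH0, abs_neg, abs_mul, abs_of_nonneg (by positivity : 0 ≤ 5 / 2 * Q + 3 * (β * (lam ^ 2)⁻¹))]
      have e : h = |kk| * (5 / 2 * Q) := by
        rw [hh, hkk, hQ]; unfold resLow QZ; ring
      rw [e]
      gcongr
      have : 0 ≤ 3 * (β * (lam ^ 2)⁻¹) := by positivity
      linarith
    have hH1 : 1 ≤ |H0| := hc2.trans hhH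
    -- the frequencies are at most `√Q`
    have hQe := QZ_eq lam m q
    rw [← hQ, ← hq3] at hQe
    have f1 : |(q.1:ℝ) / lam| ≤ √Q := Real.abs_le_sqrt (by
      rw [hQe]; nlinarith [sq_nonneg ((q.2:ℝ) / lam), sq_nonneg ((q3:ℝ) / lam), sq_nonneg ((m:ℝ) / lam)])
    have f2 : |(q.2:ℝ) / lam| ≤ √Q := Real.abs_le_sqrt (by
      rw [hQe]; nlinarith [sq_nonneg ((q.1:ℝ) / lam), sq_nonneg ((q3:ℝ) / lam), sq_nonneg ((m:ℝ) / lam)])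
    have f3 : |(q3:ℝ) / lam| ≤ √Q := Real.abs_le_sqrt (by
      rw [hQe]; nlinarith [sq_nonneg ((q.1:ℝ) / lam), sq_nonneg ((q.2:ℝ) / lam), sq_nonneg ((m:ℝ) / lam)])
    have f4 : |(m:ℝ) / lam| ≤ √Q := Real.abs_le_sqrt (by
      rw [hQe]; nlinarith [sq_nonneg ((q.1:ℝ) / lam), sq_nonneg ((q3:ℝ) / lam), sq_nonneg ((q.2:ℝ) / lam)])
    set d : ℝ := (2 * π * lam) ^ 2 with hd
    have hd0 : 0 < d := by rw [hd]; positivity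
    have hd1 : 36 * lam ^ 2 ≤ d := by
      rw [hd]
      have h6 : 6 * lam ≤ 2 * π * lam :=
        mul_le_mul_of_nonneg_right (by linarith [Real.pi_gt_three]) hl0.le
      calc 36 * lam ^ 2 = (6 * lam) ^ 2 := by ring
        _ ≤ _ := pow_le_pow_left₀ (by positivity) h6 2
    have hsQ : lam * √Q ≤ d * (|H0| / 36) := by
      have := Real.sqrt_nonneg Q
      calc lam * √Q ≤ lam * (lam * |H0|) := by gcongr; exact hc1.trans (by gcongr)
        _ = 36 * lam ^ 2 * (|H0| / 36) := by ring
        _ ≤ _ := by gcongr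
    -- decomposition of the phase speed
    set σ : ℝ → ℝ := fun t => qph β γ μ lam q.1 (v q.1 t) + qph β γ μ lam q.2 (v q.2 t) +
      qph β γ μ lam q3 (v q3 t) - qph β γ μ lam m (v m t) with hσ
    set N : ℝ → ℝ := fun t => (q.1:ℝ) / lam * ‖v q.1 t‖ ^ 2 + (q.2:ℝ) / lam * ‖v q.2 t‖ ^ 2 +
      (q3:ℝ) / lam * ‖v q3 t‖ ^ 2 - (m:ℝ) / lam * ‖v m t‖ ^ 2 with hN
    have hσe : ∀ t, σ t = H0 - μ / d * N t := by
      intro t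
      simp only [hσ, hN, hH0, hkk, hQ, qph, QZ, ← hd, hq3]
      push_cast
      ring
    have habs4 : ∀ {x1 x2 x3 x4 y1 y2 y3 y4 M : ℝ}, |x1| ≤ √Q → |x2| ≤ √Q → |x3| ≤ √Q →
        |x4| ≤ √Q → |y1| ≤ M → |y2| ≤ M → |y3| ≤ M → |y4| ≤ M →
        |x1 * y1 + x2 * y2 + x3 * y3 - x4 * y4| ≤ 4 * (√Q * M) := by
      intro x1 x2 x3 x4 y1 y2 y3 y4 M a1 a2 a3 a4 b1 b2 b3 b4
      have p : ∀ {x y : ℝ}, |x| ≤ √Q → |y| ≤ M → |x * y| ≤ √Q * M := fun hx hy => by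
        rw [abs_mul]; exact mul_le_mul hx hy (abs_nonneg _) (Real.sqrt_nonneg _)
      have p1 := abs_le.1 (p a1 b1); have p2 := abs_le.1 (p a2 b2)
      have p3 := abs_le.1 (p a3 b3); have p4 := abs_le.1 (p a4 b4)
      rw [abs_le]; constructor <;> linarith
    have hNb : ∀ t ∈ Icc a b, |N t| ≤ 4 * (√Q * lam) := by
      intro t ht
      have s : ∀ j, |‖v j t‖ ^ 2| ≤ lam := fun j => by
        rw [abs_of_nonneg (by positivity)]
        exact (pow_le_pow_left₀ (norm_nonneg _) (hA j t (hsub t ht)) 2).trans (hA1 j)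
      exact habs4 f1 f2 f3 f4 (s _) (s _) (s _) (s _)
    have hNd : ∀ t ∈ Icc a b, ∀ t' ∈ Icc a b, |N t - N t'| ≤ 4 * (√Q * (2 * lam * √|t - t'|)) := by
      intro t ht t' ht'
      have s : ∀ j, |‖v j t‖ ^ 2 - ‖v j t'‖ ^ 2| ≤ 2 * lam * √|t - t'| := fun j =>
        (abs_norm_sq_sub_le (hA j t (hsub t ht)) (hA j t' (hsub t' ht'))
          (hA' j t (hsub t ht) t' (hsub t' ht'))).trans (by gcongr; exact hA1 j)
      have := habs4 f1 f2 f3 f4 (s q.1) (s q.2) (s q3) (s m)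
      refine le_trans (le_of_eq ?_) this
      simp only [hN]; congr 1; ring
    -- the self-interaction changes the phase speed by a small fraction of its size
    have hpert : ∀ {x c : ℝ}, |x| ≤ 4 * (√Q * (lam * c)) → 0 ≤ c → |μ / d * x| ≤ |H0| / 9 * c := by
      intro x c hx hc0
      rw [abs_mul, abs_div, hμ, abs_of_pos hd0, one_div, inv_mul_le_iff₀ hd0]
      refine hx.trans ?_
      calc 4 * (√Q * (lam * c)) = 4 * (lam * √Q) * c := by ring
        _ ≤ 4 * (d * (|H0| / 36)) * c := by gcongr
        _ = _ := by ring
    have hcont : Continuous σ := by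
      simp only [hσ, qph]
      have := hv q.1; have := hv q.2; have := hv q3; have := hv m
      fun_prop
    have hcg : Continuous fun t => v q.1 t * v q.2 t * v q3 t := by
      have := hv q.1; have := hv q.2; have := hv q3
      fun_prop
    have hder : ∀ t, HasDerivAt (fun t => P q.1 t + P q.2 t + P q3 t - P m t) (σ t) t := fun t =>
      (((hP q.1 t).add (hP q.2 t)).add (hP q3 t)).sub (hP m t)
    have := osc hder hcont hcg hab hba hH1 (G := 3 * G) (by positivity)
      (fun t ht => by
        have e := hpert (c := 1) (by simpa using hNb t ht) zero_le_one
        rw [hσe]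
        have := abs_sub_abs_le_abs_sub H0 (μ / d * N t)
        linarith)
      (fun t ht => by
        have e := hpert (c := 1) (by simpa using hNb t ht) zero_le_one
        rw [hσe]
        have := abs_sub H0 (μ / d * N t)
        linarith)
      (fun t ht t' ht' => by
        have e := hpert (x := N t' - N t) (c := 2 * √|t - t'|) (by
          have := hNd t ht t' ht'
          rw [abs_sub_comm]
          exact this.trans_eq (by ring)) (by positivity)
        have e2 : σ t - σ t' = μ / d * (N t' - N t) := by rw [hσe, hσe]; ring
        rw [e2]
        have : 0 ≤ |H0| * √|t - t'| := by positivity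
        linarith)
      (fun t ht => (hgb t ht).trans (by linarith))
      (fun t ht t' ht' => norm_mul3_sub_le (hA0 _) (hA0 _)
        (hA _ t' (hsub t' ht')) (hA _ t (hsub t ht)) (hA _ t' (hsub t' ht'))
        (hA _ t (hsub t ht)) (hA' _ t (hsub t ht) t' (hsub t' ht'))
        (hA' _ t (hsub t ht) t' (hsub t' ht')) (hA' _ t (hsub t ht) t' (hsub t' ht')))
    refine this.trans ?_
    rw [hgain, Real.sqrt_inv]
    have hh0 : 0 < √h := Real.sqrt_pos.2 (by linarith)
    calc 30 * (3 * G) * (√(b - a) / √|H0|) ≤ 30 * (3 * G) * (√(b - a) / √h) := by gcongr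
      _ = _ := by ring
  · have hgain : gainZ lam m q = 1 := by
      unfold gainZ gainSq; exact if_neg hc
    rw [hgain, Real.sqrt_one, one_mul]
    have h1 : ‖∫ t in a..b, Complex.exp (Complex.I *
        ((P q.1 t + P q.2 t + P q3 t - P m t : ℝ) : ℂ)) *
        (v q.1 t * v q.2 t * v q3 t)‖ ≤ G * |b - a| := by
      apply intervalIntegral.norm_integral_le_of_norm_le_const
      intro t ht
      rw [uIoc_of_le hab] at ht
      rw [norm_mul, mul_comm Complex.I, Complex.norm_exp_ofReal_mul_I, one_mul]
      exact hgb t ⟨ht.1.le, ht.2⟩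
    rw [abs_of_nonneg (by linarith)] at h1
    refine h1.trans ?_
    have h2 : b - a ≤ √(b - a) := by
      have := Real.mul_self_sqrt (by linarith : 0 ≤ b - a)
      have := Real.sqrt_le_one.2 hba
      nlinarith
    calc G * (b - a) ≤ G * √(b - a) := by gcongr
      _ ≤ _ := by nlinarith [mul_nonneg hG0 hs0]

/-! ### Amplitudes and gauged flows -/

/-- The amplitude of the mode `m` on `[0, T]`: the larger of its supremum and its Hölder-`1/2`
seminorm in time. -/
def amp (v : ℤ → ℝ → ℂ) (T : ℝ) (m : ℤ) : ℝ≥0∞ :=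
  ⨆ t ∈ Icc 0 T, ⨆ t' ∈ Icc 0 T, max ‖v m t‖ₑ (‖v m t - v m t'‖ₑ / ENNReal.ofReal (√|t - t'|))

lemma enorm_le_amp (v : ℤ → ℝ → ℂ) {T t : ℝ} (m : ℤ) (ht : t ∈ Icc 0 T) :
    ‖v m t‖ₑ ≤ amp v T m :=
  le_iSup₂_of_le t ht (le_iSup₂_of_le t ht (le_max_left _ _))

lemma enorm_sub_le_amp (v : ℤ → ℝ → ℂ) {T t t' : ℝ} (m : ℤ) (ht : t ∈ Icc 0 T)
    (ht' : t' ∈ Icc 0 T) : ‖v m t - v m t'‖ₑ ≤ amp v T m * ENNReal.ofReal (√|t - t'|) := by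
  rcases eq_or_ne t t' with h | h
  · simp [h]
  · have h0 : ENNReal.ofReal (√|t - t'|) ≠ 0 := by
      rw [Ne, ENNReal.ofReal_eq_zero, not_le]
      exact Real.sqrt_pos.2 (abs_pos.2 (sub_ne_zero.2 h))
    rw [← ENNReal.div_le_iff h0 ENNReal.ofReal_ne_top]
    exact le_iSup₂_of_le t ht (le_iSup₂_of_le t' ht' (le_max_right _ _))

lemma amp_le_of {v : ℤ → ℝ → ℂ} {T : ℝ} {m : ℤ} {M : ℝ≥0∞}
    (h : ∀ t ∈ Icc 0 T, ‖v m t‖ₑ ≤ M)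
    (h' : ∀ t ∈ Icc 0 T, ∀ t' ∈ Icc 0 T, t' ≤ t →
      ‖v m t - v m t'‖ₑ ≤ M * ENNReal.ofReal (√(t - t'))) : amp v T m ≤ M := by
  refine iSup₂_le fun t ht => iSup₂_le fun t' ht' => max_le (h t ht) (ENNReal.div_le_of_le_mul ?_)
  rcases le_total t' t with c | c
  · rw [abs_of_nonneg (sub_nonneg.2 c)]; exact h' t ht t' ht' c
  · rw [abs_sub_comm, abs_of_nonneg (sub_nonneg.2 c), ← enorm_neg, neg_sub]; exact h' t' ht' t ht c

/-- Amplitudes grow at most like the square root of the added time. -/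
lemma amp_add_le {v : ℤ → ℝ → ℂ} {T η L : ℝ} {m : ℤ} (hT : 0 ≤ T) (hη : 0 ≤ η) (hη1 : η ≤ 1)
    (hL0 : 0 ≤ L)
    (hL : ∀ t ∈ Icc 0 (T + η), ∀ t' ∈ Icc 0 (T + η), ‖v m t - v m t'‖ ≤ L * |t - t'|) :
    amp v (T + η) m ≤ amp v T m + ENNReal.ofReal (L * √η) := by
  have hL' : ∀ t ∈ Icc 0 (T + η), ∀ t' ∈ Icc 0 (T + η),
      ‖v m t - v m t'‖ₑ ≤ ENNReal.ofReal (L * |t - t'|) := fun t ht t' ht' => by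
    rw [← ofReal_norm]; exact ENNReal.ofReal_le_ofReal (hL t ht t' ht')
  have sη := Real.mul_self_sqrt hη
  have sη1 := Real.sqrt_le_one.2 hη1
  have sη0 := Real.sqrt_nonneg η
  have hTm : T ∈ Icc 0 (T + η) := ⟨hT, by linarith⟩
  have key : ∀ r, 0 ≤ r → r ≤ η → L * r ≤ L * √η * √r := fun r hr hrη => by
    have := Real.mul_self_sqrt hr
    have : √r ≤ √η := Real.sqrt_le_sqrt hrη
    calc L * r = L * √r * √r := by rw [mul_assoc, Real.mul_self_sqrt hr]
      _ ≤ _ := by gcongr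
  refine amp_le_of (fun t ht => ?_) (fun t ht t' ht' htt => ?_)
  · rcases le_total t T with c | c
    · exact (enorm_le_amp v m ⟨ht.1, c⟩).trans le_self_add
    · calc ‖v m t‖ₑ = ‖v m T + (v m t - v m T)‖ₑ := by congr 1; ring
        _ ≤ ‖v m T‖ₑ + ‖v m t - v m T‖ₑ := enorm_add_le _ _
        _ ≤ _ := by
          gcongr
          · exact enorm_le_amp v m ⟨hT, le_rfl⟩
          · refine (hL' t ht T hTm).trans (ENNReal.ofReal_le_ofReal ?_)
            rw [abs_of_nonneg (by linarith)]
            have : t - T ≤ √η := by nlinarith [ht.2]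
            gcongr
  · rcases le_total t T with c | c
    · have := enorm_sub_le_amp v m (T := T) ⟨ht.1, c⟩ ⟨ht'.1, htt.trans c⟩
      rw [abs_of_nonneg (by linarith)] at this
      exact this.trans (by gcongr; exact le_self_add)
    rcases le_total t' T with c' | c'
    · have h1 := enorm_sub_le_amp v m (T := T) ⟨hT, le_rfl⟩ ⟨ht'.1, c'⟩
      rw [abs_of_nonneg (by linarith)] at h1
      have h2 := hL' t ht T hTm
      rw [abs_of_nonneg (by linarith)] at h2
      calc ‖v m t - v m t'‖ₑ = ‖(v m T - v m t') + (v m t - v m T)‖ₑ := by congr 1; ring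
        _ ≤ ‖v m T - v m t'‖ₑ + ‖v m t - v m T‖ₑ := enorm_add_le _ _
        _ ≤ amp v T m * ENNReal.ofReal (√(T - t')) + ENNReal.ofReal (L * (t - T)) := by gcongr
        _ ≤ amp v T m * ENNReal.ofReal (√(t - t')) +
            ENNReal.ofReal (L * √η) * ENNReal.ofReal (√(t - t')) := by
          gcongr
          rw [← ENNReal.ofReal_mul (by positivity)]
          apply ENNReal.ofReal_le_ofReal
          refine (key _ (by linarith) (by linarith [ht.2])).trans ?_
          gcongr
        _ = _ := by rw [add_mul]
    · have h2 := hL' t ht t' ht'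
      rw [abs_of_nonneg (by linarith)] at h2
      refine h2.trans ?_
      rw [add_mul, ← ENNReal.ofReal_mul (by positivity)]
      exact (ENNReal.ofReal_le_ofReal (key _ (by linarith) (by linarith [ht.2]))).trans le_add_self

lemma amp_zero (v : ℤ → ℝ → ℂ) (m : ℤ) : amp v 0 m ≤ ‖v m 0‖ₑ := by
  refine amp_le_of (fun t ht => ?_) (fun t ht t' ht' _ => ?_)
  · rw [le_antisymm ht.2 ht.1]
  · rw [le_antisymm ht.2 ht.1, le_antisymm ht'.2 ht'.1]; simp

/-- The gauge-transformed flow of the Fourier modes on `[0, 1]`: `P m` is the accumulated phase of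
the mode `m`, every mode is smooth with rapidly decaying Lipschitz constants, and its increments
are controlled by the nonresonant interactions. -/
structure GaugedFlow (β γ μ lam : ℝ) (v : ℤ → ℝ → ℂ) (P : ℤ → ℝ → ℝ) : Prop where
  hβ : 0 ≤ β
  hμ : |μ| = 1
  hl : 1 ≤ lam
  cont : ∀ m, Continuous (v m)
  phase : ∀ m t, HasDerivAt (P m) (qph β γ μ lam m (v m t)) t
  decay : ∀ k : ℕ, ∃ C : ℝ, 0 ≤ C ∧ ∀ m, (∀ t ∈ Icc (0:ℝ) 1,
    ‖v m t‖ ≤ C * jb2 ((m:ℝ) / lam) ^ (-(k:ℝ))) ∧ ∀ t ∈ Icc (0:ℝ) 1, ∀ t' ∈ Icc (0:ℝ) 1,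
    ‖v m t - v m t'‖ ≤ C * jb2 ((m:ℝ) / lam) ^ (-(k:ℝ)) * |t - t'|
  duhamel : ∀ m t t', 0 ≤ t' → t' ≤ t → t ≤ 1 → ‖v m t - v m t'‖ₑ ≤
    ENNReal.ofReal (|(m:ℝ) / lam| / (3 * (2 * π * lam) ^ 2)) * ∑' q : ℤ × ℤ, if NR m q then
      ‖∫ τ in t'..t, Complex.exp (Complex.I *
        ((P q.1 τ + P q.2 τ + P (m - q.1 - q.2) τ - P m τ : ℝ) : ℂ)) *
        (v q.1 τ * v q.2 τ * v (m - q.1 - q.2) τ)‖ₑ else 0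

lemma sq_le_wsum_zero (lam : ℝ) (B : ℤ → ℝ≥0∞) (m : ℤ) : B m ^ 2 ≤ wsum lam 0 B := by
  refine le_trans ?_ (ENNReal.le_tsum m)
  simp

/-- The amplitudes are dominated by the initial amplitudes plus the trilinear form, because every
interaction contributes `√(t - t')` to the increments. -/
lemma GaugedFlow.amp_le {β γ μ lam : ℝ} {v : ℤ → ℝ → ℂ} {P : ℤ → ℝ → ℝ}
    (h : GaugedFlow β γ μ lam v P) {T : ℝ} (hT : T ≤ 1)
    (hX : wsum lam 0 (amp v T) ≤ ENNReal.ofReal lam) (m : ℤ) :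
    amp v T m ≤ ‖v m 0‖ₑ + ENNReal.ofReal (lam ^ 2)⁻¹ *
      (ENNReal.ofReal |(m:ℝ) / lam| * triT lam (amp v T) m) := by
  have hl := h.hl
  have hl0 : 0 < lam := by linarith
  have sq : ∀ j, amp v T j ^ 2 ≤ ENNReal.ofReal lam := fun j => (sq_le_wsum_zero lam _ j).trans hX
  have fin : ∀ j, amp v T j ≠ ⊤ := fun j hj => by
    have := sq j
    rw [hj] at this
    simp at this
  set A : ℤ → ℝ := fun j => (amp v T j).toReal with hA
  have hAe : ∀ j, ENNReal.ofReal (A j) = amp v T j := fun j => ENNReal.ofReal_toReal (fin j)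
  have hA0 : ∀ j, 0 ≤ A j := fun j => ENNReal.toReal_nonneg
  have hA1 : ∀ j, A j ^ 2 ≤ lam := fun j => by
    have := sq j
    rw [← hAe, ← ENNReal.ofReal_pow (hA0 j)] at this
    exact (ENNReal.ofReal_le_ofReal_iff hl0.le).1 this
  have hA2 : ∀ j, ∀ t ∈ Icc 0 T, ‖v j t‖ ≤ A j := fun j t ht => by
    have := enorm_le_amp v j ht
    rwa [← hAe, ← ofReal_norm, ENNReal.ofReal_le_ofReal_iff (hA0 j)] at this
  have hA3 : ∀ j, ∀ t ∈ Icc 0 T, ∀ t' ∈ Icc 0 T, ‖v j t - v j t'‖ ≤ A j * √|t - t'| :=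
    fun j t ht t' ht' => by
    have := enorm_sub_le_amp v j ht ht'
    rwa [← hAe, ← ofReal_norm, ← ENNReal.ofReal_mul (hA0 j),
      ENNReal.ofReal_le_ofReal_iff (mul_nonneg (hA0 j) (Real.sqrt_nonneg _))] at this
  set R := ENNReal.ofReal (lam ^ 2)⁻¹ * (ENNReal.ofReal |(m:ℝ) / lam| * triT lam (amp v T) m) with hR
  have hinc : ∀ t ∈ Icc 0 T, ∀ t' ∈ Icc 0 T, t' ≤ t →
      ‖v m t - v m t'‖ₑ ≤ R * ENNReal.ofReal (√(t - t')) := by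
    intro t ht t' ht' htt
    refine (h.duhamel m t t' ht'.1 htt (ht.2.trans hT)).trans ?_
    have hsum : (∑' q : ℤ × ℤ, if NR m q then
      ‖∫ τ in t'..t, Complex.exp (Complex.I *
        ((P q.1 τ + P q.2 τ + P (m - q.1 - q.2) τ - P m τ : ℝ) : ℂ)) *
        (v q.1 τ * v q.2 τ * v (m - q.1 - q.2) τ)‖ₑ else 0) ≤
        ENNReal.ofReal 90 * ENNReal.ofReal (√(t - t')) * triT lam (amp v T) m := by
      unfold triT
      rw [← ENNReal.tsum_mul_left]
      refine ENNReal.tsum_le_tsum fun q => ?_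
      split_ifs with hq
      · have := term_bound h.hβ h.hμ hl hT h.cont h.phase hA2 hA3 hA0 hA1 (m := m) (q := q)
          ht'.1 htt ht.2
        rw [← ofReal_norm]
        refine (ENNReal.ofReal_le_ofReal this).trans (le_of_eq ?_)
        have g0 := Real.sqrt_nonneg (gainZ lam m q)
        have a1 := hA0 q.1
        have a2 := hA0 q.2
        have a3 := hA0 (m - q.1 - q.2)
        rw [ENNReal.ofReal_mul (by positivity), ENNReal.ofReal_mul (by positivity),
          ENNReal.ofReal_mul (by positivity), ENNReal.ofReal_mul (by positivity),
          ENNReal.ofReal_mul (by positivity), hAe, hAe, hAe]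
        ring
      · simp
    calc _ ≤ ENNReal.ofReal (|(m:ℝ) / lam| / (3 * (2 * π * lam) ^ 2)) *
          (ENNReal.ofReal 90 * ENNReal.ofReal (√(t - t')) * triT lam (amp v T) m) := by gcongr
      _ = ENNReal.ofReal (|(m:ℝ) / lam| / (3 * (2 * π * lam) ^ 2) * 90) *
          ENNReal.ofReal (√(t - t')) * triT lam (amp v T) m := by
        rw [ENNReal.ofReal_mul (by positivity)]; ring
      _ ≤ ENNReal.ofReal ((lam ^ 2)⁻¹ * |(m:ℝ) / lam|) *
          ENNReal.ofReal (√(t - t')) * triT lam (amp v T) m := by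
        gcongr ?_ * _ * _
        apply ENNReal.ofReal_le_ofReal
        have hpi := Real.pi_gt_three
        rw [div_mul_eq_mul_div, div_le_iff₀ (by positivity)]
        have e : (lam ^ 2)⁻¹ * |(m:ℝ) / lam| * (3 * (2 * π * lam) ^ 2) =
            |(m:ℝ) / lam| * (12 * π ^ 2) := by field_simp; ring
        rw [e]
        gcongr
        nlinarith
      _ = _ := by rw [ENNReal.ofReal_mul (by positivity), hR]; ring
  refine amp_le_of (fun t ht => ?_) (fun t ht t' ht' htt => ?_)
  · have h0 : (0:ℝ) ∈ Icc 0 T := ⟨le_rfl, ht.1.trans ht.2⟩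
    calc ‖v m t‖ₑ = ‖v m 0 + (v m t - v m 0)‖ₑ := by congr 1; ring
      _ ≤ ‖v m 0‖ₑ + ‖v m t - v m 0‖ₑ := enorm_add_le _ _
      _ ≤ ‖v m 0‖ₑ + R * ENNReal.ofReal (√(t - 0)) := by gcongr; exact hinc t ht 0 h0 ht.1
      _ ≤ ‖v m 0‖ₑ + R * 1 := by
        gcongr
        rw [ENNReal.ofReal_le_one, Real.sqrt_le_one]
        linarith [ht.2]
      _ = _ := by rw [mul_one]
  · exact (hinc t ht t' ht' htt).trans (by gcongr; exact le_add_self)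

/-! ### Persistence of regularity for gauged flows -/

lemma ennreal_add_sq_le (a b : ℝ≥0∞) : (a + b) ^ 2 ≤ 2 * (a ^ 2 + b ^ 2) := by
  have h := ENNReal.rpow_add_le_mul_rpow_add_rpow a b (p := 2) (by norm_num)
  norm_num at h
  exact h

/-- Absorption of half of the left-hand side, which has to be finite. -/
lemma ennreal_absorb {X Z : ℝ≥0∞} (hX : X ≠ ⊤) (h : X ≤ Z + ENNReal.ofReal (1 / 2) * X) :
    X ≤ 2 * Z := by
  rcases eq_or_ne Z ⊤ with hZ | hZ
  · simp [hZ]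
  lift X to NNReal using hX
  lift Z to NNReal using hZ
  have e : ENNReal.ofReal (1 / 2) = ((1 / 2 : NNReal) : ℝ≥0∞) := by
    rw [ENNReal.ofReal]; congr 1; ext; norm_num
  rw [e] at h
  norm_cast at h ⊢
  have h' : (X:ℝ) ≤ Z + 1 / 2 * X := by exact_mod_cast h
  have : (X:ℝ) ≤ 2 * Z := by linarith
  exact_mod_cast this

lemma wsum_mono {lam s : ℝ} {B B' : ℤ → ℝ≥0∞} (h : ∀ m, B m ≤ B' m) :
    wsum lam s B ≤ wsum lam s B' := by
  unfold wsum
  gcongr with m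
  exact h m

lemma wsum_add_le (lam s : ℝ) (B B' : ℤ → ℝ≥0∞) :
    wsum lam s (fun m => B m + B' m) ≤ 2 * (wsum lam s B + wsum lam s B') := by
  unfold wsum
  rw [← ENNReal.tsum_add, ← ENNReal.tsum_mul_left]
  refine ENNReal.tsum_le_tsum fun m => ?_
  calc _ ≤ ENNReal.ofReal (jb2 ((m:ℝ) / lam) ^ s) * (2 * (B m ^ 2 + B' m ^ 2)) := by
        gcongr; exact ennreal_add_sq_le _ _
    _ = _ := by ring

lemma wsum_zero_le {lam s : ℝ} (hs : 0 ≤ s) (B : ℤ → ℝ≥0∞) : wsum lam 0 B ≤ wsum lam s B := by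
  unfold wsum
  gcongr with m
  · unfold jb2; nlinarith [sq_nonneg ((m:ℝ) / lam)]

lemma lowC_zero : lowC 0 = 1 := by simp [lowC]

lemma summable_jb2 {lam : ℝ} (hl : 1 ≤ lam) :
    Summable fun m : ℤ => jb2 ((m:ℝ) / lam) ^ (-1 : ℝ) := by
  have h1 : Summable fun m : ℤ => lam ^ 2 * (1 / (m:ℝ) ^ 2) :=
    (Real.summable_one_div_int_pow.2 one_lt_two).mul_left _
  have h2 : Summable fun m : ℤ => if m = 0 then (1:ℝ) else 0 :=
    (hasSum_ite_eq 0 (1:ℝ)).summable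
  refine Summable.of_nonneg_of_le (fun m => rpow_nonneg (jb2_pos _).le _) (fun m => ?_) (h1.add h2)
  rw [rpow_neg_one]
  split_ifs with h
  · simp [h, jb2]
  · have : (m:ℝ) ≠ 0 := Int.cast_ne_zero.2 h
    have hm : 0 < (m:ℝ) ^ 2 := by positivity
    rw [add_zero, inv_le_comm₀ (jb2_pos _) (by positivity), mul_one_div, inv_div, ← div_pow]
    unfold jb2; linarith

/-- Sequences that decay fast enough have finite weighted square sums. -/
lemma wsum_lt_top {lam : ℝ} (hl : 1 ≤ lam) (s : ℝ) {B : ℤ → ℝ≥0∞}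
    (hB : ∀ k : ℕ, ∃ C : ℝ, 0 ≤ C ∧ ∀ m, B m ≤ ENNReal.ofReal (C * jb2 ((m:ℝ) / lam) ^ (-(k:ℝ)))) :
    wsum lam s B < ⊤ := by
  obtain ⟨k, hk⟩ := exists_nat_ge ((s + 1) / 2)
  obtain ⟨C, hC, h⟩ := hB k
  have hterm : ∀ m : ℤ, ENNReal.ofReal (jb2 ((m:ℝ) / lam) ^ s) * B m ^ 2 ≤
      ENNReal.ofReal (C ^ 2 * jb2 ((m:ℝ) / lam) ^ (-1 : ℝ)) := fun m => by
    have hj := jb2_pos ((m:ℝ) / lam)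
    have hj1 : 1 ≤ jb2 ((m:ℝ) / lam) := by unfold jb2; nlinarith [sq_nonneg ((m:ℝ) / lam)]
    calc _ ≤ ENNReal.ofReal (jb2 ((m:ℝ) / lam) ^ s) *
          ENNReal.ofReal (C * jb2 ((m:ℝ) / lam) ^ (-(k:ℝ))) ^ 2 := by gcongr; exact h m
      _ = ENNReal.ofReal (C ^ 2 * jb2 ((m:ℝ) / lam) ^ (s + -(k:ℝ) + -(k:ℝ))) := by
        rw [← ENNReal.ofReal_pow (by positivity), ← ENNReal.ofReal_mul (by positivity),
          rpow_add hj, rpow_add hj]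
        congr 1; ring
      _ ≤ _ := by
        apply ENNReal.ofReal_le_ofReal
        exact mul_le_mul_of_nonneg_left
          (rpow_le_rpow_of_exponent_le hj1 (by linarith)) (by positivity)
  refine lt_of_le_of_lt (ENNReal.tsum_le_tsum hterm) ?_
  rw [← ENNReal.ofReal_tsum_of_nonneg (fun m => by have := jb2_pos ((m:ℝ) / lam); positivity)
    ((summable_jb2 hl).mul_left _)]
  exact ENNReal.ofReal_lt_top

lemma amp_mono (v : ℤ → ℝ → ℂ) {T T' : ℝ} (h : T ≤ T') (m : ℤ) : amp v T m ≤ amp v T' m :=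
  iSup₂_le fun t ht => iSup₂_le fun t' ht' =>
    max_le (enorm_le_amp v m ⟨ht.1, ht.2.trans h⟩)
      (le_iSup₂_of_le t ⟨ht.1, ht.2.trans h⟩ (le_iSup₂_of_le t' ⟨ht'.1, ht'.2.trans h⟩
        (le_max_right _ _)))

/-- Finiteness of the energies of the amplitudes, needed to absorb terms in the estimates. -/
lemma GaugedFlow.wsum_amp_lt_top {β γ μ lam : ℝ} {v : ℤ → ℝ → ℂ} {P : ℤ → ℝ → ℝ}
    (h : GaugedFlow β γ μ lam v P) (s : ℝ) {T : ℝ} (hT : T ≤ 1) :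
    wsum lam s (amp v T) < ⊤ := by
  refine lt_of_le_of_lt (wsum_mono (amp_mono v hT)) (wsum_lt_top h.hl s fun k => ?_)
  obtain ⟨C, hC, hd⟩ := h.decay k
  refine ⟨2 * C, by positivity, fun m => ?_⟩
  have hj := rpow_nonneg (jb2_pos ((m:ℝ) / lam)).le (-(k:ℝ))
  have := amp_add_le (v := v) (m := m) (L := C * jb2 ((m:ℝ) / lam) ^ (-(k:ℝ))) le_rfl
    zero_le_one le_rfl (by positivity) (by rw [zero_add]; exact (hd m).2)
  rw [zero_add, Real.sqrt_one, mul_one] at this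
  refine this.trans ?_
  rw [mul_assoc, two_mul, ENNReal.ofReal_add (by positivity) (by positivity)]
  gcongr
  refine (amp_zero v m).trans ?_
  rw [← ofReal_norm]
  exact ENNReal.ofReal_le_ofReal ((hd m).1 0 ⟨le_rfl, zero_le_one⟩)

/-- The energy inequality on a time interval on which the `L²` amplitude is small. -/
lemma energy_step : ∃ C : ℝ, 0 < C ∧ ∀ {β γ μ lam : ℝ} {v : ℤ → ℝ → ℂ} {P : ℤ → ℝ → ℝ},
    GaugedFlow β γ μ lam v P → ∀ s : ℝ, -(1 / 4) < s → ∀ T ε : ℝ, T ≤ 1 → 0 ≤ ε → ε ≤ 1 →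
    wsum lam 0 (amp v T) ≤ ENNReal.ofReal (lam * ε) →
    wsum lam s (amp v T) ≤ 2 * wsum lam s (fun m => ‖v m 0‖ₑ) + ENNReal.ofReal (C * ε ^ 2) *
      (3 * wsum lam s (amp v T) + ENNReal.ofReal (lowC s) * wsum lam 0 (amp v T)) := by
  obtain ⟨C, hC, htri⟩ := trilinear
  refine ⟨2 * C, by positivity, ?_⟩
  intro β γ μ lam v P h s hs T ε hT hε hε1 hX
  have hl := h.hl
  have hl0 : 0 < lam := by linarith
  have hX' : wsum lam 0 (amp v T) ≤ ENNReal.ofReal lam :=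
    hX.trans (ENNReal.ofReal_le_ofReal (by nlinarith))
  refine (wsum_mono (h.amp_le hT hX')).trans ((wsum_add_le _ _ _ _).trans ?_)
  rw [mul_add]
  refine add_le_add le_rfl ?_
  have e : wsum lam s (fun m => ENNReal.ofReal (lam ^ 2)⁻¹ *
      (ENNReal.ofReal |(m:ℝ) / lam| * triT lam (amp v T) m)) = ENNReal.ofReal (lam ^ 2)⁻¹ ^ 2 *
      ∑' m : ℤ, ENNReal.ofReal (jb2 ((m:ℝ) / lam) ^ s) *
        (ENNReal.ofReal |(m:ℝ) / lam| * triT lam (amp v T) m) ^ 2 := by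
    unfold wsum
    rw [← ENNReal.tsum_mul_left]
    refine tsum_congr fun m => ?_
    ring
  rw [e]
  set Z := 3 * wsum lam s (amp v T) + ENNReal.ofReal (lowC s) * wsum lam 0 (amp v T) with hZ
  calc _ ≤ 2 * (ENNReal.ofReal (lam ^ 2)⁻¹ ^ 2 *
        (ENNReal.ofReal (C * lam ^ 2) * (Z * ENNReal.ofReal (lam * ε) ^ 2))) := by
        gcongr
        exact (htri s hs lam hl (amp v T)).trans (by gcongr)
    _ = ENNReal.ofReal (2 * ((lam ^ 2)⁻¹ ^ 2 * (C * lam ^ 2 * (lam * ε) ^ 2))) * Z := by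
        have h0 : (0:ℝ) ≤ (lam ^ 2)⁻¹ := by positivity
        rw [ENNReal.ofReal_mul (p := 2) (by norm_num),
          ENNReal.ofReal_mul (p := (lam ^ 2)⁻¹ ^ 2) (by positivity),
          ENNReal.ofReal_mul (p := C * lam ^ 2) (by positivity),
          ENNReal.ofReal_pow h0 2,
          ENNReal.ofReal_pow (p := lam * ε) (by positivity) 2, ENNReal.ofReal_ofNat]
        ring
    _ = _ := by congr 2; field_simp

/-- Persistence of regularity for small data, by a continuity argument in time. -/
lemma flow_bound : ∃ ε : ℝ, 0 < ε ∧ ε ≤ 1 ∧ ∀ {β γ μ lam : ℝ} {v : ℤ → ℝ → ℂ}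
    {P : ℤ → ℝ → ℝ}, GaugedFlow β γ μ lam v P →
    wsum lam 0 (fun m => ‖v m 0‖ₑ) ≤ ENNReal.ofReal (lam * (ε / 16)) →
    ∀ s : ℝ, -(1 / 4) < s → wsum lam s (amp v 1) ≤
      ENNReal.ofReal (4 + 4 * lowC s) * wsum lam s (fun m => ‖v m 0‖ₑ) := by
  obtain ⟨C, hC, hstep⟩ := energy_step
  -- `C ε² ≤ 1/8`, so that the nonlinear terms can be absorbed on the left
  set ε : ℝ := min 1 (1 / (8 * C)) with hε
  have hε0 : 0 < ε := lt_min one_pos (by positivity)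
  have hε1 : ε ≤ 1 := min_le_left _ _
  have hεC : C * ε ^ 2 ≤ 1 / 8 := by
    have : ε ≤ 1 / (8 * C) := min_le_right _ _
    rw [le_div_iff₀ (by positivity)] at this
    nlinarith
  refine ⟨ε, hε0, hε1, ?_⟩
  intro β γ μ lam v P h hY
  have hl := h.hl
  have hl0 : 0 < lam := by linarith
  set Y := wsum lam 0 (fun m => ‖v m 0‖ₑ) with hYdef
  have improve : ∀ T : ℝ, T ≤ 1 → wsum lam 0 (amp v T) ≤ ENNReal.ofReal (lam * ε) →
      wsum lam 0 (amp v T) ≤ 4 * Y := by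
    intro T hT hX
    have := hstep h 0 (by norm_num) T ε hT hε0.le hε1 hX
    rw [lowC_zero, ENNReal.ofReal_one, one_mul, ← hYdef] at this
    have h2 : wsum lam 0 (amp v T) ≤ 2 * Y + ENNReal.ofReal (1 / 2) * wsum lam 0 (amp v T) := by
      refine this.trans (add_le_add le_rfl ?_)
      calc _ = ENNReal.ofReal (C * ε ^ 2) * ENNReal.ofReal 4 * wsum lam 0 (amp v T) := by
            rw [ENNReal.ofReal_ofNat]; ring
        _ ≤ _ := by
            rw [← ENNReal.ofReal_mul (by positivity)]
            gcongr
            linarith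
    exact (ennreal_absorb (h.wsum_amp_lt_top 0 hT).ne h2).trans_eq (by ring)
  obtain ⟨K, hK, hd⟩ := h.decay 1
  set S : ℝ := ∑' m : ℤ, jb2 ((m:ℝ) / lam) ^ (-1 : ℝ) with hS
  have hS0 : 0 ≤ S := tsum_nonneg fun m => rpow_nonneg (jb2_pos _).le _
  obtain ⟨N, hN⟩ := exists_nat_gt (2 * (K ^ 2 * S) / (lam * (ε / 2)))
  have hN0 : (0:ℝ) < N := lt_of_le_of_lt (by positivity) hN
  rw [div_lt_iff₀ (by positivity)] at hN
  -- smallness propagates in `N` steps of length `1 / N`: on each step the amplitudes grow so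
  -- little that the smallness threshold `lam * ε` is not crossed, and `improve` restores `4 * Y`
  have hind : ∀ j : ℕ, j ≤ N → wsum lam 0 (amp v (j / N)) ≤ 4 * Y := by
    intro j
    induction j with
    | zero =>
      intro _
      simp only [Nat.cast_zero, zero_div]
      refine (wsum_mono (amp_zero v)).trans ?_
      exact le_mul_of_one_le_left (zero_le) (by norm_num)
    | succ j ih =>
      intro hj
      have ih := ih (by omega)
      have hjN : ((j + 1 : ℕ) : ℝ) / N ≤ 1 := by
        rw [div_le_one hN0]; exact_mod_cast hj
      have e : ((j + 1 : ℕ) : ℝ) / N = j / N + 1 / N := by push_cast; ring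
      refine improve _ hjN ?_
      rw [e] at hjN ⊢
      have hN1 : 1 / (N:ℝ) ≤ 1 := by
        have : (0:ℝ) ≤ j / N := by positivity
        linarith
      have hamp : ∀ m, amp v (j / N + 1 / N) m ≤ amp v (j / N) m +
          ENNReal.ofReal (K * jb2 ((m:ℝ) / lam) ^ (-1 : ℝ) * √(1 / N)) := fun m => by
        have hj0 := rpow_nonneg (jb2_pos ((m:ℝ) / lam)).le (-1)
        refine amp_add_le (by positivity) (by positivity) hN1 (by positivity) ?_
        intro t ht t' ht'
        simpa using (hd m).2 t ⟨ht.1, ht.2.trans hjN⟩ t' ⟨ht'.1, ht'.2.trans hjN⟩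
      refine (wsum_mono hamp).trans ((wsum_add_le _ _ _ _).trans ?_)
      have h2 : wsum lam 0 (fun m => ENNReal.ofReal (K * jb2 ((m:ℝ) / lam) ^ (-1 : ℝ) * √(1 / N))) ≤
          ENNReal.ofReal (K ^ 2 * S / N) := by
        have e3 : K ^ 2 * S / N = ∑' m : ℤ, K ^ 2 / N * jb2 ((m:ℝ) / lam) ^ (-1 : ℝ) := by
          rw [tsum_mul_left]; ring
        rw [e3, ENNReal.ofReal_tsum_of_nonneg
          (fun m => by have := jb2_pos ((m:ℝ) / lam); positivity) ((summable_jb2 hl).mul_left _)]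
        refine ENNReal.tsum_le_tsum fun m => ?_
        have hj0 := jb2_pos ((m:ℝ) / lam)
        have hj1 : jb2 ((m:ℝ) / lam) ^ (-1 : ℝ) ≤ 1 :=
          rpow_le_one_of_one_le_of_nonpos
            (by unfold jb2; nlinarith [sq_nonneg ((m:ℝ) / lam)]) (by norm_num)
        have hj2 : 0 ≤ jb2 ((m:ℝ) / lam) ^ (-1 : ℝ) := by positivity
        rw [rpow_zero, ENNReal.ofReal_one, one_mul, ← ENNReal.ofReal_pow (by positivity)]
        apply ENNReal.ofReal_le_ofReal
        rw [mul_pow, mul_pow, Real.sq_sqrt (by positivity)]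
        calc _ = K ^ 2 / N * (jb2 ((m:ℝ) / lam) ^ (-1 : ℝ)) ^ 2 := by ring
          _ ≤ _ := by gcongr; nlinarith
      calc _ ≤ 2 * (4 * ENNReal.ofReal (lam * (ε / 16)) + ENNReal.ofReal (K ^ 2 * S / N)) := by
            gcongr
            exact ih.trans (by gcongr)
        _ = ENNReal.ofReal (2 * (4 * (lam * (ε / 16)) + K ^ 2 * S / N)) := by
            rw [ENNReal.ofReal_mul (p := 2) (by norm_num),
              ENNReal.ofReal_add (by positivity) (by positivity),
              ENNReal.ofReal_mul (p := 4) (by norm_num), ENNReal.ofReal_ofNat, ENNReal.ofReal_ofNat]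
        _ ≤ _ := by
            apply ENNReal.ofReal_le_ofReal
            have : K ^ 2 * S / N ≤ lam * (ε / 2) / 2 := by
              rw [div_le_iff₀ hN0]; linarith
            linarith
  have h1 : wsum lam 0 (amp v 1) ≤ 4 * Y := by
    have := hind N le_rfl
    rwa [div_self hN0.ne'] at this
  have h1' : wsum lam 0 (amp v 1) ≤ ENNReal.ofReal (lam * ε) := by
    calc _ ≤ 4 * ENNReal.ofReal (lam * (ε / 16)) := h1.trans (by gcongr)
      _ = ENNReal.ofReal (4 * (lam * (ε / 16))) := by
        rw [ENNReal.ofReal_mul (p := 4) (by norm_num), ENNReal.ofReal_ofNat]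
      _ ≤ _ := ENNReal.ofReal_le_ofReal (by nlinarith)
  intro s hs
  have hD := lowC_nonneg s
  have := hstep h s hs 1 ε le_rfl hε0.le hε1 h1'
  set Xs := wsum lam s (amp v 1) with hXs
  set Ys := wsum lam s (fun m => ‖v m 0‖ₑ) with hYs
  have hlow : ENNReal.ofReal (lowC s) * wsum lam 0 (amp v 1) ≤
      ENNReal.ofReal (4 * lowC s) * Ys := by
    rcases lt_or_ge s 0 with c | c
    · simp [lowC_eq_zero c]
    · calc _ ≤ ENNReal.ofReal (lowC s) * (4 * Ys) := by
            gcongr; exact h1.trans (by gcongr; exact wsum_zero_le c _)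
        _ = _ := by rw [ENNReal.ofReal_mul (by norm_num), ENNReal.ofReal_ofNat]; ring
  have h2 : Xs ≤ (2 * Ys + ENNReal.ofReal (1 / 2) * (ENNReal.ofReal (4 * lowC s) * Ys)) +
      ENNReal.ofReal (1 / 2) * Xs := by
    refine this.trans ?_
    rw [mul_add, ← add_assoc, add_right_comm]
    refine add_le_add (add_le_add le_rfl ?_) ?_
    · exact mul_le_mul' (ENNReal.ofReal_le_ofReal (by linarith)) hlow
    · rw [← mul_assoc, ← ENNReal.ofReal_ofNat, ← ENNReal.ofReal_mul (by positivity)]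
      gcongr
      linarith
  refine (ennreal_absorb (h.wsum_amp_lt_top s le_rfl).ne h2).trans (le_of_eq ?_)
  rw [ENNReal.ofReal_add (by norm_num) (by positivity), ENNReal.ofReal_ofNat]
  have e : (2:ℝ≥0∞) * ENNReal.ofReal (1 / 2) = 1 := by
    rw [← ENNReal.ofReal_ofNat, ← ENNReal.ofReal_mul (by norm_num)]; norm_num
  calc _ = 4 * Ys + 2 * ENNReal.ofReal (1 / 2) * ENNReal.ofReal (4 * lowC s) * Ys := by ring
    _ = _ := by rw [e]; ring

/-! ### Fourier coefficients of smooth periodic functions -/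

/-- The spatial derivative of a space–time function. -/
def dx (v : ℝ → ℝ → ℂ) (t x : ℝ) : ℂ := fderiv ℝ (Function.uncurry v) (t, x) (0, 1)

lemma contDiff_dx {v : ℝ → ℝ → ℂ} (h : ContDiff ℝ (⊤ : ℕ∞) (Function.uncurry v)) :
    ContDiff ℝ (⊤ : ℕ∞) (Function.uncurry (dx v)) := by
  have : ContDiff ℝ (⊤ : ℕ∞) (fderiv ℝ (Function.uncurry v)) := h.fderiv_right (by simp)
  exact this.clm_apply contDiff_const

lemma hasDerivAt_dx {v : ℝ → ℝ → ℂ} (h : ContDiff ℝ (⊤ : ℕ∞) (Function.uncurry v)) (t x : ℝ) :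
    HasDerivAt (v t) (dx v t x) x := by
  have h1 : HasFDerivAt (Function.uncurry v) (fderiv ℝ (Function.uncurry v) (t, x)) (t, x) :=
    (h.differentiable (by simp) _).hasFDerivAt
  have h2 : HasDerivAt (fun y : ℝ => (t, y)) ((0, 1) : ℝ × ℝ) x :=
    (hasDerivAt_const x t).prodMk (hasDerivAt_id x)
  exact h1.comp_hasDerivAt x h2

lemma hasDerivAt_time {v : ℝ → ℝ → ℂ} (h : ContDiff ℝ (⊤ : ℕ∞) (Function.uncurry v)) (t x : ℝ) :
    HasDerivAt (fun t => v t x) (fderiv ℝ (Function.uncurry v) (t, x) (1, 0)) t := by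
  have h1 : HasFDerivAt (Function.uncurry v) (fderiv ℝ (Function.uncurry v) (t, x)) (t, x) :=
    (h.differentiable (by simp) _).hasFDerivAt
  have h2 : HasDerivAt (fun y : ℝ => (y, x)) ((1, 0) : ℝ × ℝ) t :=
    (hasDerivAt_id t).prodMk (hasDerivAt_const t x)
  exact h1.comp_hasDerivAt t h2

lemma dx_periodic {v : ℝ → ℝ → ℂ} (h : ContDiff ℝ (⊤ : ℕ∞) (Function.uncurry v)) {L : ℝ}
    (hp : ∀ t x, v t (x + L) = v t x) (t x : ℝ) : dx v t (x + L) = dx v t x := by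
  have h1 : HasDerivAt (fun y => v t (y + L)) (dx v t (x + L)) x :=
    (hasDerivAt_dx h t (x + L)).comp_add_const x L
  have h2 := hasDerivAt_dx h t x
  rw [show (fun y => v t (y + L)) = v t from funext fun y => hp t y] at h1
  exact h1.unique h2

lemma norm_exp_freq (a x : ℝ) : ‖Complex.exp (-Complex.I * (a : ℂ) * (x : ℂ))‖ = 1 := by
  rw [show -Complex.I * (a : ℂ) * (x : ℂ) = ((-(a * x) : ℝ) : ℂ) * Complex.I by push_cast; ring]
  exact Complex.norm_exp_ofReal_mul_I _

/-- Integration by parts; the boundary terms cancel by periodicity. -/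
lemma fcoefL_dx {v : ℝ → ℝ → ℂ} (h : ContDiff ℝ (⊤ : ℕ∞) (Function.uncurry v)) {lam : ℝ}
    (hl : 1 ≤ lam) (hp : ∀ t x, v t (x + 2 * π * lam) = v t x) (t : ℝ) (m : ℤ) :
    fcoefL lam (dx v t) m = Complex.I * (((m:ℝ) / lam : ℝ) : ℂ) * fcoefL lam (v t) m := by
  unfold fcoefL
  set a : ℝ := (m:ℝ) / lam with ha
  have hc : Continuous (dx v t) := (contDiff_dx h).continuous.comp (by fun_prop : Continuous fun x => (t, x))
  have he : ∀ x : ℝ, HasDerivAt (fun x : ℝ => Complex.exp (-Complex.I * (a:ℂ) * (x:ℂ)))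
      (Complex.exp (-Complex.I * (a:ℂ) * (x:ℂ)) * (-Complex.I * (a:ℂ))) x := fun x => by
    have : HasDerivAt (fun x : ℝ => -Complex.I * (a:ℂ) * (x:ℂ)) (-Complex.I * (a:ℂ)) x := by
      simpa using (Complex.ofRealCLM.hasDerivAt (x := x)).const_mul (-Complex.I * (a:ℂ))
    exact this.cexp
  rw [intervalIntegral.integral_mul_deriv_eq_deriv_mul (fun x _ => he x)
    (fun x _ => hasDerivAt_dx h t x)
    (Continuous.intervalIntegrable (by fun_prop) _ _) (hc.intervalIntegrable _ _)]
  have e0 : v t (2 * π * lam) = v t 0 := by simpa using hp t 0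
  have e1 : Complex.exp (-Complex.I * (a:ℂ) * ((2 * π * lam : ℝ) : ℂ)) = 1 := by
    rw [Complex.exp_eq_one_iff]
    refine ⟨-m, ?_⟩
    have hl' : (lam:ℂ) ≠ 0 := by exact_mod_cast (by linarith : lam ≠ 0)
    rw [ha]; push_cast; field_simp
  rw [e0, e1]
  simp only [Complex.ofReal_zero, mul_zero, Complex.exp_zero, sub_self, zero_sub]
  rw [← intervalIntegral.integral_const_mul, ← intervalIntegral.integral_neg]
  congr 1; ext x; ring

lemma fcoefL_sub {lam : ℝ} {f g : ℝ → ℂ} (hf : Continuous f) (hg : Continuous g) (m : ℤ) :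
    fcoefL lam f m - fcoefL lam g m = fcoefL lam (fun x => f x - g x) m := by
  unfold fcoefL
  rw [← intervalIntegral.integral_sub (Continuous.intervalIntegrable (by fun_prop) _ _)
    (Continuous.intervalIntegrable (by fun_prop) _ _)]
  congr 1; ext x; ring

lemma norm_fcoefL_le {lam : ℝ} (hl : 1 ≤ lam) {f : ℝ → ℂ} {C : ℝ}
    (h : ∀ x ∈ Icc 0 (2 * π * lam), ‖f x‖ ≤ C) (m : ℤ) :
    ‖fcoefL lam f m‖ ≤ C * (2 * π * lam) := by
  have hL : 0 ≤ 2 * π * lam := by positivity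
  refine (intervalIntegral.norm_integral_le_of_norm_le_const (C := C) fun x hx => ?_).trans_eq ?_
  · rw [uIoc_of_le hL] at hx
    rw [norm_mul, norm_exp_freq, one_mul]
    exact h x ⟨hx.1.le, hx.2⟩
  · rw [sub_zero, abs_of_nonneg hL]

/-- Fourier coefficients of a smooth periodic function decay faster than any power, and so do
their Lipschitz constants in time. -/
lemma fcoefL_decay (lam : ℝ) (hl : 1 ≤ lam) (k : ℕ) : ∀ v : ℝ → ℝ → ℂ,
    ContDiff ℝ (⊤ : ℕ∞) (Function.uncurry v) → (∀ t x, v t (x + 2 * π * lam) = v t x) →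
    ∃ C : ℝ, 0 ≤ C ∧ ∀ m : ℤ, (∀ t ∈ Icc (0:ℝ) 1,
      |(m:ℝ) / lam| ^ k * ‖fcoefL lam (v t) m‖ ≤ C) ∧
      ∀ t ∈ Icc (0:ℝ) 1, ∀ t' ∈ Icc (0:ℝ) 1,
        |(m:ℝ) / lam| ^ k * ‖fcoefL lam (v t) m - fcoefL lam (v t') m‖ ≤ C * |t - t'| := by
  induction k with
  | zero =>
    intro v h hp
    have hK : IsCompact (Icc (0:ℝ) 1 ×ˢ Icc 0 (2 * π * lam)) := isCompact_Icc.prod isCompact_Icc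
    obtain ⟨A, hA⟩ := hK.exists_bound_of_continuousOn h.continuous.continuousOn
    have hd : Continuous fun p : ℝ × ℝ => fderiv ℝ (Function.uncurry v) p (1, 0) :=
      ((h.continuous_fderiv (by simp)).clm_apply continuous_const)
    obtain ⟨B, hB⟩ := hK.exists_bound_of_continuousOn hd.continuousOn
    have hcv : ∀ t, Continuous (v t) := fun t =>
      h.continuous.comp (by fun_prop : Continuous fun x => (t, x))
    have hL : 0 ≤ 2 * π * lam := by positivity
    have hm0 : ((0:ℝ), (0:ℝ)) ∈ Icc (0:ℝ) 1 ×ˢ Icc 0 (2 * π * lam) := by simp [hL]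
    have hA0 : 0 ≤ A := (norm_nonneg _).trans (hA _ hm0)
    have hB0 : 0 ≤ B := (norm_nonneg _).trans (hB _ hm0)
    refine ⟨(A + B) * (2 * π * lam), by positivity, fun m => ⟨fun t ht => ?_, fun t ht t' ht' => ?_⟩⟩
    · rw [pow_zero, one_mul]
      refine (norm_fcoefL_le hl (C := A) (fun x hx => hA (t, x) ⟨ht, hx⟩) m).trans ?_
      gcongr; linarith
    · rw [pow_zero, one_mul, fcoefL_sub (hcv t) (hcv t')]
      refine (norm_fcoefL_le hl (C := B * |t - t'|) (fun x hx => ?_) m).trans ?_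
      · exact (convex_Icc (0:ℝ) 1).norm_image_sub_le_of_norm_hasDerivWithin_le
          (fun y hy => (hasDerivAt_time h y x).hasDerivWithinAt) (fun y hy => hB (y, x) ⟨hy, hx⟩)
          ht' ht
      · have : 0 ≤ A * (2 * π * lam) * |t - t'| := by positivity
        linarith
  | succ k ih =>
    intro v h hp
    obtain ⟨C, hC, hd⟩ := ih (dx v) (contDiff_dx h) (dx_periodic h hp)
    have key : ∀ (m : ℤ) (z : ℂ), |(m:ℝ) / lam| ^ (k + 1) * ‖z‖ =
        |(m:ℝ) / lam| ^ k * ‖Complex.I * (((m:ℝ) / lam : ℝ) : ℂ) * z‖ := fun m z => by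
      rw [norm_mul, norm_mul, Complex.norm_I, Complex.norm_real, Real.norm_eq_abs]; ring
    refine ⟨C, hC, fun m => ⟨fun t ht => ?_, fun t ht t' ht' => ?_⟩⟩
    · rw [key, ← fcoefL_dx h hl hp]; exact (hd m).1 t ht
    · rw [key, mul_sub, ← fcoefL_dx h hl hp, ← fcoefL_dx h hl hp]; exact (hd m).2 t ht t' ht'

lemma jb2_pow_le (x : ℝ) (k : ℕ) : jb2 x ^ k ≤ 2 ^ k * (1 + |x| ^ (2 * k)) := by
  rw [pow_mul, sq_abs]
  have hx := sq_nonneg x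
  rcases le_total (x ^ 2) 1 with h | h
  · calc jb2 x ^ k ≤ 2 ^ k := pow_le_pow_left₀ (by unfold jb2; positivity) (by unfold jb2; linarith) _
      _ ≤ _ := le_mul_of_one_le_right (by positivity) (by linarith [pow_nonneg hx k])
  · calc jb2 x ^ k ≤ (2 * x ^ 2) ^ k :=
          pow_le_pow_left₀ (by unfold jb2; positivity) (by unfold jb2; linarith) _
      _ = 2 ^ k * (x ^ 2) ^ k := mul_pow _ _ _
      _ ≤ _ := by gcongr; linarith

/-- `fcoefL_decay` with powers of the bracket `1 + (m / lam)²`. -/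
lemma fcoefL_decay' {lam : ℝ} (hl : 1 ≤ lam) {v : ℝ → ℝ → ℂ}
    (h : ContDiff ℝ (⊤ : ℕ∞) (Function.uncurry v)) (hp : ∀ t x, v t (x + 2 * π * lam) = v t x)
    (k : ℕ) : ∃ C : ℝ, 0 ≤ C ∧ ∀ m : ℤ, (∀ t ∈ Icc (0:ℝ) 1,
      ‖fcoefL lam (v t) m‖ ≤ C * jb2 ((m:ℝ) / lam) ^ (-(k:ℝ))) ∧
      ∀ t ∈ Icc (0:ℝ) 1, ∀ t' ∈ Icc (0:ℝ) 1, ‖fcoefL lam (v t) m - fcoefL lam (v t') m‖ ≤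
        C * jb2 ((m:ℝ) / lam) ^ (-(k:ℝ)) * |t - t'| := by
  obtain ⟨A, hA, ha⟩ := fcoefL_decay lam hl 0 v h hp
  obtain ⟨B, hB, hb⟩ := fcoefL_decay lam hl (2 * k) v h hp
  have key : ∀ (m : ℤ) (z r : ℝ), 0 ≤ z → |(m:ℝ) / lam| ^ 0 * z ≤ A * r →
      |(m:ℝ) / lam| ^ (2 * k) * z ≤ B * r →
      z ≤ 2 ^ k * (A + B) * jb2 ((m:ℝ) / lam) ^ (-(k:ℝ)) * r := by
    intro m z r hz h1 h2
    have hj := jb2_pos ((m:ℝ) / lam)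
    rw [rpow_neg hj.le, rpow_natCast, mul_right_comm, ← div_eq_mul_inv, le_div_iff₀ (by positivity)]
    have := mul_le_mul_of_nonneg_left (jb2_pow_le ((m:ℝ) / lam) k) hz
    have h3 : (0:ℝ) < 2 ^ k := by positivity
    rw [pow_zero, one_mul] at h1
    calc _ ≤ z * (2 ^ k * (1 + |(m:ℝ) / lam| ^ (2 * k))) := this
      _ = 2 ^ k * (z + |(m:ℝ) / lam| ^ (2 * k) * z) := by ring
      _ ≤ 2 ^ k * (A * r + B * r) := by gcongr
      _ = _ := by ring
  refine ⟨2 ^ k * (A + B), by positivity, fun m => ⟨fun t ht => ?_, fun t ht t' ht' => ?_⟩⟩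
  · have := key m _ 1 (norm_nonneg _) (by simpa using (ha m).1 t ht) (by simpa using (hb m).1 t ht)
    simpa using this
  · exact key m _ _ (norm_nonneg _) ((ha m).2 t ht t' ht') ((hb m).2 t ht t' ht')

lemma continuous_uhat {lam : ℝ} {v : ℝ → ℝ → ℂ}
    (h : ContDiff ℝ (⊤ : ℕ∞) (Function.uncurry v)) (m : ℤ) :
    Continuous fun t => uhat lam v t m := by
  unfold uhat fcoefL
  have hc := h.continuous
  apply intervalIntegral.continuous_parametric_intervalIntegral_of_continuous'
  have : Continuous fun p : ℝ × ℝ => v p.1 p.2 := hc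
  fun_prop

/-! ### Parseval identity and the gauge transform -/

/-- Parseval on the torus of length `2πλ`, in the form of an upper bound for the coefficients. -/
lemma wsum_zero_fcoefL_le {lam : ℝ} (hl : 1 ≤ lam) {f : ℝ → ℂ} (hf : Continuous f) :
    wsum lam 0 (fun m => ‖fcoefL lam f m‖ₑ) ≤ ENNReal.ofReal (2 * π * lam * L2SqL lam f) := by
  have hL : 0 < 2 * π * lam := by positivity
  have hM : MemLp f 2 (volume.restrict (Ioc 0 (2 * π * lam))) := by
    rw [memLp_two_iff_integrable_sq_norm hf.aestronglyMeasurable]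
    exact ((hf.norm.pow 2).continuousOn.integrableOn_Icc).mono_set Ioc_subset_Icc_self
  have hs := hasSum_sq_fourierCoeffOn hL hM
  have hfc : ∀ m : ℤ, ‖fcoefL lam f m‖ ^ 2 = (2 * π * lam) ^ 2 * ‖fourierCoeffOn hL f m‖ ^ 2 := by
    intro m
    have : fcoefL lam f m = ((2 * π * lam : ℝ) : ℂ) * fourierCoeffOn hL f m := by
      rw [fourierCoeffOn_eq_integral, Complex.real_smul, ← mul_assoc, ← Complex.ofReal_mul, sub_zero,
        mul_one_div_cancel hL.ne', Complex.ofReal_one, one_mul]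
      unfold fcoefL
      congr 1; ext x
      rw [fourier_coe_apply, smul_eq_mul]
      congr 2
      have hl' : (lam:ℂ) ≠ 0 := by exact_mod_cast (by linarith : lam ≠ 0)
      have hp' : (π:ℂ) ≠ 0 := by exact_mod_cast pi_ne_zero
      push_cast; field_simp
    rw [this, norm_mul, mul_pow, Complex.norm_real, Real.norm_of_nonneg hL.le]
  have hs2 : HasSum (fun m => ‖fcoefL lam f m‖ ^ 2) (2 * π * lam * L2SqL lam f) := by
    have := hs.mul_left ((2 * π * lam) ^ 2)
    simp_rw [← hfc] at this
    have e : (2 * π * lam) ^ 2 * (2 * π * lam - 0)⁻¹ • ∫ x in (0:ℝ)..2 * π * lam, ‖f x‖ ^ 2 =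
        2 * π * lam * L2SqL lam f := by
      rw [smul_eq_mul, sub_zero]; unfold L2SqL; field_simp
    rwa [e] at this
  unfold wsum
  rw [← hs2.tsum_eq, ENNReal.ofReal_tsum_of_nonneg (fun m => by positivity) hs2.summable]
  refine ENNReal.tsum_le_tsum fun m => ?_
  rw [rpow_zero, ENNReal.ofReal_one, one_mul, ENNReal.ofReal_pow (norm_nonneg _), ofReal_norm]

section flow
variable (β γ μ lam : ℝ) (u : ℝ → ℝ → ℂ)

/-- The accumulated phase of the mode `m` of `u`. -/
def phaseOf (m : ℤ) (t : ℝ) : ℝ := ∫ τ in (0:ℝ)..t, qph β γ μ lam m (uhat lam u τ m)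

/-- The mode `m` of `u` in the moving frame in which the linear and the self-interaction phases
are removed. -/
def gauged (m : ℤ) (t : ℝ) : ℂ :=
  Complex.exp (-Complex.I * (phaseOf β γ μ lam u m t : ℂ)) * uhat lam u t m

end flow

section
variable {β γ μ lam : ℝ} {u : ℝ → ℝ → ℂ}

lemma norm_exp_neg_I (x : ℝ) : ‖Complex.exp (-Complex.I * (x : ℂ))‖ = 1 := by
  simpa using norm_exp_freq 1 x

lemma norm_gauged (m : ℤ) (t : ℝ) : ‖gauged β γ μ lam u m t‖ = ‖uhat lam u t m‖ := by
  rw [gauged, norm_mul, norm_exp_neg_I, one_mul]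

lemma qph_gauged (m : ℤ) (t : ℝ) :
    qph β γ μ lam m (gauged β γ μ lam u m t) = qph β γ μ lam m (uhat lam u t m) := by
  unfold qph; rw [norm_gauged]

lemma hasDerivAt_phaseOf (hu : ContDiff ℝ (⊤ : ℕ∞) (Function.uncurry u)) (m : ℤ) (t : ℝ) :
    HasDerivAt (phaseOf β γ μ lam u m) (qph β γ μ lam m (uhat lam u t m)) t := by
  have hc : Continuous fun τ => qph β γ μ lam m (uhat lam u τ m) := by
    have := continuous_uhat (lam := lam) hu m
    unfold qph; fun_prop
  exact (hc.integral_hasStrictDerivAt 0 t).hasDerivAt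

lemma continuous_phaseOf (hu : ContDiff ℝ (⊤ : ℕ∞) (Function.uncurry u)) (m : ℤ) :
    Continuous (phaseOf β γ μ lam u m) :=
  continuous_iff_continuousAt.2 fun t => (hasDerivAt_phaseOf hu m t).continuousAt

lemma continuous_gauged (hu : ContDiff ℝ (⊤ : ℕ∞) (Function.uncurry u)) (m : ℤ) :
    Continuous (gauged β γ μ lam u m) := by
  have h1 := continuous_phaseOf (β := β) (γ := γ) (μ := μ) (lam := lam) hu m
  have h2 := continuous_uhat (lam := lam) hu m
  unfold gauged; fun_prop

lemma norm_exp_neg_I_sub_le (a b : ℝ) : ‖Complex.exp (-Complex.I * (a : ℂ)) -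
    Complex.exp (-Complex.I * (b : ℂ))‖ ≤ |a - b| := by
  have : Complex.exp (-Complex.I * (a : ℂ)) - Complex.exp (-Complex.I * (b : ℂ)) =
      Complex.exp (-Complex.I * (b : ℂ)) * (Complex.exp (Complex.I * ((b - a : ℝ) : ℂ)) - 1) := by
    rw [mul_sub, ← Complex.exp_add, mul_one]
    congr 2; push_cast; ring
  rw [this, norm_mul, norm_exp_neg_I, one_mul, abs_sub_comm]
  exact Real.norm_exp_I_mul_ofReal_sub_one_le

/-- Bounded modes have phase speed of polynomial size in the frequency. -/
lemma abs_qph_le (hμ : |μ| = 1) (hβ : 0 ≤ β) (hl : 1 ≤ lam) {A : ℝ} (m : ℤ) {y : ℂ}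
    (hy : ‖y‖ ≤ A) :
    |qph β γ μ lam m y| ≤ (1 + β + |γ| + A ^ 2) * jb2 ((m:ℝ) / lam) ^ 3 := by
  unfold qph
  set a := (m:ℝ) / lam
  have hj1 : 1 ≤ jb2 a := by unfold jb2; nlinarith [sq_nonneg a]
  have ha : |a| ≤ jb2 a := by unfold jb2; nlinarith [sq_nonneg (|a| - 1), sq_abs a, abs_nonneg a]
  have ha2 : |a| ^ 2 ≤ jb2 a := by unfold jb2; rw [sq_abs]; linarith
  have h1 : |a| ≤ jb2 a ^ 3 := ha.trans (le_self_pow₀ hj1 (by norm_num))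
  have h3 : |a| ^ 3 ≤ jb2 a ^ 3 := pow_le_pow_left₀ (abs_nonneg _) ha _
  have h5 : |a| ^ 5 ≤ jb2 a ^ 3 := by
    calc |a| ^ 5 = |a| * (|a| ^ 2) ^ 2 := by ring
      _ ≤ jb2 a * jb2 a ^ 2 := by gcongr
      _ = _ := by ring
  have hli : (lam ^ 2)⁻¹ ≤ 1 := inv_le_one_of_one_le₀ (one_le_pow₀ hl)
  have hpi : 1 ≤ (2 * π * lam) ^ 2 := by
    apply one_le_pow₀; nlinarith [pi_gt_three]
  have t2 : |β * (lam ^ 2)⁻¹ * a ^ 3| ≤ β * jb2 a ^ 3 := by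
    rw [abs_mul, abs_mul, abs_pow, abs_of_nonneg hβ, abs_of_nonneg (by positivity)]
    calc β * (lam ^ 2)⁻¹ * |a| ^ 3 ≤ β * 1 * jb2 a ^ 3 := by gcongr
      _ = _ := by ring
  have t3 : |γ * a| ≤ |γ| * jb2 a ^ 3 := by rw [abs_mul]; gcongr
  have t4 : |μ * a / (2 * π * lam) ^ 2 * ‖y‖ ^ 2| ≤ A ^ 2 * jb2 a ^ 3 := by
    rw [abs_mul, abs_div, abs_mul, hμ, one_mul, abs_of_nonneg (by positivity : 0 ≤ (2 * π * lam) ^ 2),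
      abs_of_nonneg (by positivity : 0 ≤ ‖y‖ ^ 2), mul_comm]
    gcongr
    exact (div_le_self (abs_nonneg _) hpi).trans h1
  have t1 : |a ^ 5| ≤ jb2 a ^ 3 := by rwa [abs_pow]
  rw [abs_le] at *
  constructor <;> linarith [t1.1, t1.2, t2.1, t2.2, t3.1, t3.2, t4.1, t4.2]

/-- The gauged modes and their Lipschitz constants in time decay rapidly: the Lipschitz constant of
the phase costs three powers of the bracket, which the decay of `û` makes up for. -/
lemma gauged_decay (hβ : 0 ≤ β) (hμ : |μ| = 1) (hl : 1 ≤ lam)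
    (hu : ContDiff ℝ (⊤ : ℕ∞) (Function.uncurry u)) (hp : ∀ t x, u t (x + 2 * π * lam) = u t x)
    (k : ℕ) : ∃ C : ℝ, 0 ≤ C ∧ ∀ m : ℤ, (∀ t ∈ Icc (0:ℝ) 1,
      ‖gauged β γ μ lam u m t‖ ≤ C * jb2 ((m:ℝ) / lam) ^ (-(k:ℝ))) ∧
      ∀ t ∈ Icc (0:ℝ) 1, ∀ t' ∈ Icc (0:ℝ) 1,
        ‖gauged β γ μ lam u m t - gauged β γ μ lam u m t'‖ ≤
          C * jb2 ((m:ℝ) / lam) ^ (-(k:ℝ)) * |t - t'| := by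
  obtain ⟨A, hA, ha⟩ := fcoefL_decay' hl hu hp 0
  obtain ⟨B, hB, hb⟩ := fcoefL_decay' hl hu hp k
  obtain ⟨C, hC, hc⟩ := fcoefL_decay' hl hu hp (k + 3)
  set D := 1 + β + |γ| + A ^ 2 with hD
  have hD0 : 0 ≤ D := by positivity
  refine ⟨B + D * C, by positivity, fun m => ⟨fun t ht => ?_, fun t ht t' ht' => ?_⟩⟩
  · rw [norm_gauged]
    have hj := rpow_nonneg (jb2_pos ((m:ℝ) / lam)).le (-(k:ℝ))
    refine ((hb m).1 t ht).trans ?_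
    gcongr
    nlinarith [mul_nonneg hD0 hC]
  · have hj := jb2_pos ((m:ℝ) / lam)
    have hP : |phaseOf β γ μ lam u m t - phaseOf β γ μ lam u m t'| ≤
        D * jb2 ((m:ℝ) / lam) ^ 3 * |t - t'| := by
      refine (convex_Icc (0:ℝ) 1).norm_image_sub_le_of_norm_hasDerivWithin_le
        (fun y _ => (hasDerivAt_phaseOf hu m y).hasDerivWithinAt) (fun y hy => ?_) ht' ht
      refine abs_qph_le hμ hβ hl m ?_
      simpa [uhat] using (ha m).1 y hy
    have hU := (hc m).1 t' ht'
    have e : gauged β γ μ lam u m t - gauged β γ μ lam u m t' =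
        Complex.exp (-Complex.I * (phaseOf β γ μ lam u m t : ℂ)) *
          (uhat lam u t m - uhat lam u t' m) +
        (Complex.exp (-Complex.I * (phaseOf β γ μ lam u m t : ℂ)) -
          Complex.exp (-Complex.I * (phaseOf β γ μ lam u m t' : ℂ))) * uhat lam u t' m := by
      unfold gauged; ring
    have e2 : jb2 ((m:ℝ) / lam) ^ 3 * jb2 ((m:ℝ) / lam) ^ (-((k + 3 : ℕ):ℝ)) =
        jb2 ((m:ℝ) / lam) ^ (-(k:ℝ)) := by
      rw [← rpow_natCast, ← rpow_add hj]; congr 1; push_cast; ring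
    rw [e]
    refine (norm_add_le _ _).trans ?_
    rw [norm_mul, norm_mul, norm_exp_neg_I, one_mul]
    calc _ ≤ B * jb2 ((m:ℝ) / lam) ^ (-(k:ℝ)) * |t - t'| +
          D * jb2 ((m:ℝ) / lam) ^ 3 * |t - t'| * (C * jb2 ((m:ℝ) / lam) ^ (-((k + 3 : ℕ):ℝ))) := by
          refine add_le_add ((hb m).2 t ht t' ht') (mul_le_mul ?_ hU (norm_nonneg _) (by positivity))
          exact (norm_exp_neg_I_sub_le _ _).trans hP
      _ = _ := by rw [← e2]; ring

end

/-! ### Solutions are gauged flows -/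

/-- The nonresonant interaction `q` in the gauged variables. -/
def inter (v : ℤ → ℝ → ℂ) (P : ℤ → ℝ → ℝ) (m : ℤ) (q : ℤ × ℤ) (τ : ℝ) : ℂ :=
  if NR m q then Complex.exp (Complex.I *
    ((P q.1 τ + P q.2 τ + P (m - q.1 - q.2) τ - P m τ : ℝ) : ℂ)) *
    (v q.1 τ * v q.2 τ * v (m - q.1 - q.2) τ) else 0

section
variable {β γ γ' μ lam : ℝ} {u₀ : ℝ → ℂ} {u : ℝ → ℝ → ℂ}

lemma uhat_eq_gauged (m : ℤ) (t : ℝ) : uhat lam u t m =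
    Complex.exp (Complex.I * (phaseOf β γ μ lam u m t : ℂ)) * gauged β γ μ lam u m t := by
  rw [gauged, ← mul_assoc, ← Complex.exp_add]; simp

/-- In the gauged variables only the nonresonant interactions drive the modes: the two terms of the
equation with `|û₀|²` cancel, and the remaining phase terms are the derivative of `phaseOf`. The
shift from `γ` to `γ'` collects the conserved mass of the datum. -/
lemma hasDerivAt_gauged (hu : ContDiff ℝ (⊤ : ℕ∞) (Function.uncurry u)) {S : Set ℝ}
    (hγ : γ' = γ + μ / (2 * π * lam) * L2SqL lam u₀)
    (hsol : IsRenormSolOn β γ μ lam u₀ u S) (m : ℤ) {t : ℝ} (ht : t ∈ S) :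
    HasDerivAt (gauged β γ' μ lam u m)
      (((μ * ((m:ℝ) / lam) / (3 * (2 * π * lam) ^ 2) : ℝ) : ℂ) * Complex.I *
        ∑' q, inter (gauged β γ' μ lam u) (phaseOf β γ' μ lam u) m q t) t := by
  have h1 := hsol.2 t ht m
  have h2 := (hasDerivAt_phaseOf (β := β) (γ := γ') (μ := μ) (lam := lam) hu m t).ofReal_comp
  have h3 : HasDerivAt (fun t => Complex.exp (-Complex.I * (phaseOf β γ' μ lam u m t : ℂ)))
      (Complex.exp (-Complex.I * (phaseOf β γ' μ lam u m t : ℂ)) *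
        (-Complex.I * (qph β γ' μ lam m (uhat lam u t m) : ℂ))) t := (h2.const_mul _).cexp
  have h4 := h3.mul h1
  refine h4.congr_deriv ?_
  have key : ∑' q, inter (gauged β γ' μ lam u) (phaseOf β γ' μ lam u) m q t =
      Complex.exp (-Complex.I * (phaseOf β γ' μ lam u m t : ℂ)) * nonresSum lam u u u t m := by
    unfold nonresSum
    rw [← tsum_mul_left]
    refine tsum_congr fun q => ?_
    unfold inter
    by_cases h : NR m q
    · rw [if_pos h, if_pos (by exact h), uhat_eq_gauged (β := β) (γ := γ') (μ := μ) q.1,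
        uhat_eq_gauged (β := β) (γ := γ') (μ := μ) q.2,
        uhat_eq_gauged (β := β) (γ := γ') (μ := μ) (m - q.1 - q.2)]
      have : Complex.exp (Complex.I * ((phaseOf β γ' μ lam u q.1 t + phaseOf β γ' μ lam u q.2 t +
          phaseOf β γ' μ lam u (m - q.1 - q.2) t - phaseOf β γ' μ lam u m t : ℝ) : ℂ)) =
          Complex.exp (-Complex.I * (phaseOf β γ' μ lam u m t : ℂ)) *
          Complex.exp (Complex.I * (phaseOf β γ' μ lam u q.1 t : ℂ)) *
          Complex.exp (Complex.I * (phaseOf β γ' μ lam u q.2 t : ℂ)) *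
          Complex.exp (Complex.I * (phaseOf β γ' μ lam u (m - q.1 - q.2) t : ℂ)) := by
        rw [← Complex.exp_add, ← Complex.exp_add, ← Complex.exp_add]
        congr 1; push_cast; ring
      rw [this]; ring
    · rw [if_neg h, if_neg (by exact h), mul_zero]
  rw [key]
  unfold qph pL
  rw [hγ]
  push_cast
  ring

/-- A smooth solution of the renormalized equation, in the gauged variables, is a gauged flow. -/
lemma gaugedFlow_of_sol (hβ : 0 ≤ β) (hμ : |μ| = 1) (hl : 1 ≤ lam)
    (hu : ContDiff ℝ (⊤ : ℕ∞) (Function.uncurry u)) (hp : ∀ t x, u t (x + 2 * π * lam) = u t x)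
    (hγ : γ' = γ + μ / (2 * π * lam) * L2SqL lam u₀)
    (hsol : IsRenormSolOn β γ μ lam u₀ u (Icc 0 1)) :
    GaugedFlow β γ' μ lam (gauged β γ' μ lam u) (phaseOf β γ' μ lam u) where
  hβ := hβ
  hμ := hμ
  hl := hl
  cont := continuous_gauged hu
  phase m t := by rw [qph_gauged]; exact hasDerivAt_phaseOf hu m t
  decay := gauged_decay hβ hμ hl hu hp
  duhamel m t t' ht' htt ht := by
    obtain ⟨C, hC, hd⟩ := gauged_decay (γ := γ') hβ hμ hl hu hp 1
    set v := gauged β γ' μ lam u with hv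
    set P := phaseOf β γ' μ lam u with hP
    have hvc : ∀ m, Continuous (v m) := continuous_gauged hu
    have hPc : ∀ m, Continuous (P m) := continuous_phaseOf hu
    have hsub : uIcc t' t ⊆ Icc 0 1 := by rw [uIcc_of_le htt]; exact Icc_subset_Icc ht' ht
    set w : ℤ → ℝ := fun j => jb2 ((j:ℝ) / lam) ^ (-1 : ℝ) with hw
    have hw0 : 0 ≤ w := fun j => rpow_nonneg (jb2_pos _).le _
    have hw1 : ∀ j, w j ≤ 1 := fun j => rpow_le_one_of_one_le_of_nonpos
      (by unfold jb2; nlinarith [sq_nonneg ((j:ℝ) / lam)]) (by norm_num)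
    have hvb : ∀ j, ∀ τ ∈ Icc (0:ℝ) 1, ‖v j τ‖ ≤ C * w j := fun j τ hτ => by
      simpa using (hd j).1 τ hτ
    have hsum : Summable fun q : ℤ × ℤ => C ^ 3 * (w q.1 * w q.2) :=
      ((summable_jb2 hl).mul_of_nonneg (summable_jb2 hl) hw0 hw0).mul_left _
    have hcont : ∀ q, Continuous (inter v P m q) := fun q => by
      have h1 := hvc q.1
      have h2 := hvc q.2
      have h3 := hvc (m - q.1 - q.2)
      have h4 := hPc q.1
      have h5 := hPc q.2
      have h6 := hPc (m - q.1 - q.2)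
      have h7 := hPc m
      unfold inter
      split_ifs
      · fun_prop
      · fun_prop
    have hbd : ∀ q, ∀ τ ∈ Icc (0:ℝ) 1, ‖inter v P m q τ‖ ≤ C ^ 3 * (w q.1 * w q.2) := by
      intro q τ hτ
      have p1 := hw0 q.1
      have p2 := hw0 q.2
      simp only [Pi.zero_apply] at p1 p2
      unfold inter
      split_ifs
      · rw [norm_mul, norm_mul, norm_mul, mul_comm Complex.I, Complex.norm_exp_ofReal_mul_I, one_mul]
        calc _ ≤ (C * w q.1) * (C * w q.2) * (C * 1) := by
              gcongr
              · exact hvb _ τ hτ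
              · exact hvb _ τ hτ
              · exact (hvb _ τ hτ).trans (by gcongr; exact hw1 _)
          _ = _ := by ring
      · rw [norm_zero]; positivity
    have hG : ContinuousOn (fun τ => ∑' q, inter v P m q τ) (Icc 0 1) :=
      continuousOn_tsum (fun q => (hcont q).continuousOn) hsum hbd
    set c : ℂ := ((μ * ((m:ℝ) / lam) / (3 * (2 * π * lam) ^ 2) : ℝ) : ℂ) * Complex.I with hc
    have hftc : v m t - v m t' = c * ∫ τ in t'..t, ∑' q, inter v P m q τ := by
      rw [← intervalIntegral.integral_const_mul]
      refine (intervalIntegral.integral_eq_sub_of_hasDerivAt (fun τ hτ => ?_) ?_).symm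
      · exact hasDerivAt_gauged hu hγ hsol m (hsub hτ)
      · exact ((continuousOn_const.mul hG).mono hsub).intervalIntegrable
    have hsub' : uIoc t' t ⊆ Icc (0:ℝ) 1 := uIoc_subset_uIcc.trans hsub
    have hInt : HasSum (fun q => ∫ τ in t'..t, inter v P m q τ)
        (∫ τ in t'..t, ∑' q, inter v P m q τ) := by
      refine intervalIntegral.hasSum_integral_of_dominated_convergence
        (fun q _ => C ^ 3 * (w q.1 * w q.2)) (fun q => (hcont q).aestronglyMeasurable)
        (fun q => ae_of_all _ fun τ hτ => hbd q τ (hsub' hτ)) (ae_of_all _ fun _ _ => hsum)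
        intervalIntegrable_const (ae_of_all _ fun τ hτ => ?_)
      exact (Summable.of_norm_bounded hsum fun q => hbd q τ (hsub' hτ)).hasSum
    have hcn : ‖c‖ₑ = ENNReal.ofReal (|(m:ℝ) / lam| / (3 * (2 * π * lam) ^ 2)) := by
      rw [← ofReal_norm, hc, norm_mul, Complex.norm_I, mul_one, Complex.norm_real,
        Real.norm_eq_abs, abs_div, abs_mul, hμ, one_mul,
        abs_of_nonneg (by positivity : 0 ≤ 3 * (2 * π * lam) ^ 2)]
    rw [hftc, enorm_mul, hcn, ← hInt.tsum_eq]
    gcongr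
    refine enorm_tsum_le_tsum_enorm.trans (ENNReal.tsum_le_tsum fun q => ?_)
    unfold inter
    split_ifs <;> simp

end

end Kawahara

/-- a priori bound: for `s > −1/4` there is `b ≥ 1/2` with
`ς = 3 − 5b + 2s > 0` such that smooth real solutions of the renormalized rescaled
modified Kawahara equation with small data satisfy
`(1/λ) Σ_n ⟨n⟩^{2s} |û(t,n)|² ≲ ‖u₀‖_{H_λ^s}² + λ^ς ‖u‖_{X_λ^{s,b}}⁴`. -/
theorem apriori_HsSq_bound :
    ∃ ρ : ℝ, 0 < ρ ∧ ρ < 1 ∧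
      ∀ β γ μ : ℝ, 0 ≤ β → (μ = 1 ∨ μ = -1) → ∀ s : ℝ, -(1/4) < s →
      ∃ b : ℝ, 1/2 ≤ b ∧ 0 < 3 - 5*b + 2*s ∧
      ∃ C : ℝ, 0 < C ∧
        ∀ lam : ℝ, 1 ≤ lam →
        ∀ u₀ : ℝ → ℂ, SmoothRealPeriodicS lam u₀ → L2NormL lam u₀ ≤ ρ →
        ∀ u : ℝ → ℝ → ℂ, SmoothRealPeriodic lam u →
          IsRenormSolOn β γ μ lam u₀ u (Icc (0:ℝ) 1) →
          XsbSqL β γ μ lam u₀ s b u < ⊤ →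
        ∀ t ∈ Icc (0:ℝ) 1,
          ENNReal.ofReal (1 / lam) *
              (∑' m : ℤ, ENNReal.ofReal (jb2 ((m : ℝ) / lam) ^ s * ‖uhat lam u t m‖ ^ 2))
            ≤ ENNReal.ofReal C *
              (HsSqL lam s u₀ + ENNReal.ofReal (lam ^ (3 - 5*b + 2*s)) *
                XsbSqL β γ μ lam u₀ s b u ^ (2 : ℕ)) := by
  obtain ⟨ε, hε, hε1, hflow⟩ := flow_bound
  refine ⟨ε / 20, by positivity, by linarith, ?_⟩
  intro β γ μ hβ hμ s hs
  -- with `b = 1/2` the exponent `ς = 1/2 + 2s` is positive exactly when `s > -1/4`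
  refine ⟨1 / 2, le_rfl, by linarith, ?_⟩
  have hD := lowC_nonneg s
  refine ⟨(4 + 4 * lowC s) * (2 * π), by positivity, ?_⟩
  intro lam hl u₀ hu₀ hsmall u hu hsol _ t ht
  have hl0 : 0 < lam := by linarith
  have hμ1 : |μ| = 1 := by rcases hμ with rfl | rfl <;> simp
  have hG := gaugedFlow_of_sol hβ hμ1 hl hu.1 hu.2.2 rfl hsol
  have h0 : ∀ m, ‖gauged β (γ + μ / (2 * π * lam) * L2SqL lam u₀) μ lam u m 0‖ₑ =
      ‖fcoefL lam u₀ m‖ₑ := fun m => by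
    rw [← ofReal_norm, norm_gauged, uhat, show u 0 = u₀ from funext hsol.1, ofReal_norm]
  have hdata : wsum lam 0 (fun m => ‖fcoefL lam u₀ m‖ₑ) ≤ ENNReal.ofReal (lam * (ε / 16)) := by
    refine (wsum_zero_fcoefL_le hl hu₀.1.continuous).trans (ENNReal.ofReal_le_ofReal ?_)
    have h1 : L2SqL lam u₀ ≤ (ε / 20) ^ 2 := (Real.sqrt_le_left (by positivity)).1 hsmall
    -- `2π(ε/20)² ≤ ε/16` because `π < 4` and `ε ≤ 1`
    have h2 : 2 * π * (ε / 20) ^ 2 ≤ ε / 16 := by nlinarith [pi_lt_four, pi_pos, mul_pos hε hε]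
    calc 2 * π * lam * L2SqL lam u₀ ≤ 2 * π * lam * (ε / 20) ^ 2 := by gcongr
      _ = lam * (2 * π * (ε / 20) ^ 2) := by ring
      _ ≤ _ := by gcongr
  have hmain := hflow hG (by simpa only [h0] using hdata) s hs
  simp only [h0] at hmain
  have hterm : ∀ (x r : ℝ) (z : ℂ), ENNReal.ofReal (jb2 x ^ r * ‖z‖ ^ 2) =
      ENNReal.ofReal (jb2 x ^ r) * ‖z‖ₑ ^ 2 := fun x r z => by
    rw [ENNReal.ofReal_mul (rpow_nonneg (jb2_pos x).le r), ENNReal.ofReal_pow (norm_nonneg _),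
      ofReal_norm]
  have hH : HsSqL lam s u₀ =
      ENNReal.ofReal (1 / (2 * π * lam)) * wsum lam s (fun m => ‖fcoefL lam u₀ m‖ₑ) := by
    unfold HsSqL wsum; simp only [hterm]
  have hle : (∑' m : ℤ, ENNReal.ofReal (jb2 ((m : ℝ) / lam) ^ s * ‖uhat lam u t m‖ ^ 2)) ≤
      wsum lam s (amp (gauged β (γ + μ / (2 * π * lam) * L2SqL lam u₀) μ lam u) 1) := by
    simp only [hterm]
    refine ENNReal.tsum_le_tsum fun m => ?_
    gcongr
    refine le_trans (le_of_eq ?_) (enorm_le_amp _ m ht)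
    rw [← ofReal_norm, ← ofReal_norm, norm_gauged]
  calc _ ≤ ENNReal.ofReal (1 / lam) *
        (ENNReal.ofReal (4 + 4 * lowC s) * wsum lam s (fun m => ‖fcoefL lam u₀ m‖ₑ)) := by
        gcongr; exact hle.trans hmain
    _ = ENNReal.ofReal ((4 + 4 * lowC s) * (2 * π)) * HsSqL lam s u₀ := by
        rw [hH, ← mul_assoc, ← mul_assoc, ← ENNReal.ofReal_mul (by positivity),
          ← ENNReal.ofReal_mul (by positivity)]
        congr 2; field_simp
    _ ≤ _ := by gcongr; exact le_self_add
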